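/- ∫_{t ∈ span(𝒥)} ( ∑_{J ∈ 𝒥(t) ∪ ℋ(t)} r̃(𝒥(t) ∪ ℋ(t))(J) ) dt ≤ (d + 1) · ∫_{t ∈ span(𝒥)} ( ∑_{J ∈ 𝒥(t)} r̃(𝒥(t))(J) ) dt, where a sum over the empty job set is taken to be 0 (note that for t ∈ span(𝒥) the sets 𝒥(t) and 𝒥(t) ∪ ℋ(t) are nonempty, and both integrands are piecewise constant with finitely many pieces, so the integrals are well defined). -/

import Mathlib

open scoped Classical
open Finset MeasureTheory

namespace BSHM

noncomputable section

/-- The set of candidate parents of machine type `i`: types `j ∈ M` with `j > i`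
and a strictly smaller normalized cost rate per capacity unit. -/
def pset (m : ℕ) (g r : ℕ → ℝ) (i : ℕ) : Set ℕ :=
  {j | j ≤ m ∧ i < j ∧ r j / g j < r i / g i}

/-- The parent `p i` of machine type `i` (equal to `0` when the parent is undefined,
since any actual parent has index `≥ 2`). -/
def p (m : ℕ) (g r : ℕ → ℝ) (i : ℕ) : ℕ := sInf (pset m g r i)

/-- `pdef i` asserts that the parent of `i` is defined. -/
def pdef (m : ℕ) (g r : ℕ → ℝ) (i : ℕ) : Prop := (pset m g r i).Nonempty

/-- One step of the parent relation: `b` is the (defined) parent of `a`. -/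
def pstep (m : ℕ) (g r : ℕ → ℝ) (a b : ℕ) : Prop :=
  pdef m g r a ∧ b = p m g r a

/-- `P i`: the set consisting of `i` together with all of its iterated parents. -/
def P (m : ℕ) (g r : ℕ → ℝ) (i : ℕ) : Set ℕ :=
  {z | Relation.ReflTransGen (pstep m g r) i z}

/-- `A i`: the set of nodes in the tree rooted at `i`,
i.e. all `z ∈ M` having `i` as an ancestor (or equal to `i`). -/
def A (m : ℕ) (g r : ℕ → ℝ) (i : ℕ) : Set ℕ :=
  {z | 1 ≤ z ∧ z ≤ m ∧ i ∈ P m g r z}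

/-- `v i`: the lowest-indexed node in the tree rooted at `i`. -/
def v (m : ℕ) (g r : ℕ → ℝ) (i : ℕ) : ℕ := sInf (A m g r i)

/-- `y i`: the younger siblings of `i` (same parent status, smaller index). -/
def y (m : ℕ) (g r : ℕ → ℝ) (i : ℕ) : Set ℕ :=
  {z | 1 ≤ z ∧ z ≤ m ∧ z < i ∧ p m g r z = p m g r i}

/-- `esib i`: the elder siblings of `i`. -/
def esib (m : ℕ) (g r : ℕ → ℝ) (i : ℕ) : Set ℕ :=
  {z | 1 ≤ z ∧ z ≤ m ∧ i < z ∧ p m g r z = p m g r i}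

/-- `T k := {k} ∪ ⋃_{z ∈ P(k)} y(z)`. -/
def T (m : ℕ) (g r : ℕ → ℝ) (k : ℕ) : Set ℕ :=
  {k} ∪ ⋃ z ∈ P m g r k, y m g r z

/-- `T k` as a `Finset` (all relevant nodes lie in `{k} ∪ [1, m]`). -/
def TIcc (m : ℕ) (g r : ℕ → ℝ) (k : ℕ) : Finset ℕ :=
  (insert k (Finset.Icc 1 m)).filter (fun z => z ∈ T m g r k)

/-! ### Jobs and one-shot scheduling -/

variable {ι : Type*}

/-- The exact machine type of a job `J`: the least `z ∈ M` with `s J ≤ g z`. -/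
def mty (m : ℕ) (g : ℕ → ℝ) (s : ι → ℝ) (J : ι) : ℕ :=
  sInf {z | 1 ≤ z ∧ z ≤ m ∧ s J ≤ g z}

/-- Total size of a finite set of jobs. -/
def Ssum (s : ι → ℝ) (W : Finset ι) : ℝ := ∑ J ∈ W, s J

/-- `k0f X`: the highest-indexed exact machine type among the jobs of `X`. -/
def k0f (m : ℕ) (g : ℕ → ℝ) (s : ι → ℝ) (X : Finset ι) : ℕ :=
  X.sup (fun J => mty m g s J)

/-- `H z X`: the jobs of `X` whose exact machine type lies in the tree rooted at `z`. -/
def H (m : ℕ) (g r : ℕ → ℝ) (s : ι → ℝ) (z : ℕ) (X : Finset ι) : Finset ι :=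
  X.filter (fun J => mty m g s J ∈ A m g r z)

/-- `SH X z := S(H_z(X))`. -/
def SH (m : ℕ) (g r : ℕ → ℝ) (s : ι → ℝ) (X : Finset ι) (z : ℕ) : ℝ :=
  Ssum s (H m g r s z X)

/-- Feasibility of a machine configuration `w : M → ℕ` for the job set `X`. -/
def Feasible (m : ℕ) (g : ℕ → ℝ) (s : ι → ℝ) (X : Finset ι) (w : ℕ → ℕ) : Prop :=
  ∀ i, 1 ≤ i → i ≤ m →
    Ssum s (X.filter (fun J => i ≤ mty m g s J)) ≤ ∑ z ∈ Finset.Icc i m, (w z : ℝ) * g z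

/-- The cost of a machine configuration. -/
def cost (m : ℕ) (r : ℕ → ℝ) (w : ℕ → ℕ) : ℝ :=
  ∑ z ∈ Finset.Icc 1 m, (w z : ℝ) * r z

/-- The optimal one-shot scheduling cost for a job set `X`. -/
def OPT1 (m : ℕ) (g r : ℕ → ℝ) (s : ι → ℝ) (X : Finset ι) : ℝ :=
  sInf {c : ℝ | ∃ w : ℕ → ℕ, Feasible m g s X w ∧ c = cost m r w}

/-- The fractional machine configuration `cn_{z*}` for the job set `X`, with
highest-indexed machine type `zs`.  A node `i ∈ T(zs) \ {zs}` is the boundary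
type `i*` exactly when `∑_{z ∈ T(zs), z > i} S(H_z) ≤ cn(zs)·g(zs) <
∑_{z ∈ T(zs), z ≥ i} S(H_z)`; nodes above the boundary get `0`,
nodes below it get `S(H_i)/g_i`. -/
def cn (m : ℕ) (g r : ℕ → ℝ) (s : ι → ℝ) (X : Finset ι) (zs i : ℕ) : ℝ :=
  let B : ℝ := (⌈SH m g r s X zs / g zs⌉₊ : ℝ) * g zs
  let Sge : ℝ := ∑ z ∈ (TIcc m g r zs).filter (fun z => i ≤ z), SH m g r s X z
  let Sgt : ℝ := ∑ z ∈ (TIcc m g r zs).filter (fun z => i < z), SH m g r s X z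
  if i = zs then (⌈SH m g r s X zs / g zs⌉₊ : ℝ)
  else if i ∈ T m g r zs then
    (if Sgt ≤ B ∧ B < Sge then (Sge - B) / g i
     else if B < Sgt then SH m g r s X i / g i
     else 0)
  else 0

/-- `cn_{zs}` is decent: for every strict ancestor `zt` of `zs`, the total cost of
the machines of types in `T(zs) ∩ A(zt)` is at most the cost of one type-`zt` machine. -/
def decent (m : ℕ) (g r : ℕ → ℝ) (s : ι → ℝ) (X : Finset ι) (zs : ℕ) : Prop :=
  ∀ zt ∈ P m g r zs, zt ≠ zs →
    (∑ z ∈ (TIcc m g r zs).filter (fun z => z ∈ A m g r zt), cn m g r s X zs z * r z) ≤ r zt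

/-- `z⋄(X)`: the least `z* ∈ P(k0(X))` such that `cn_{z*}` is decent. -/
def zdia (m : ℕ) (g r : ℕ → ℝ) (s : ι → ℝ) (X : Finset ι) : ℕ :=
  sInf {zs | zs ∈ P m g r (k0f m g s X) ∧ decent m g r s X zs}

/-- The child of `zd` whose subtree contains node `k`. -/
def chil (m : ℕ) (g r : ℕ → ℝ) (zd k : ℕ) : ℕ :=
  sInf {i | p m g r i = zd ∧ k ∈ A m g r i}

/-- The node `i ∈ T(zd)` whose subtree contains node `k`. -/
def idxT (m : ℕ) (g r : ℕ → ℝ) (zd k : ℕ) : ℕ :=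
  sInf {i | i ∈ T m g r zd ∧ k ∈ A m g r i}

/-- The children `f(zd)` of node `zd`, as a `Finset`. -/
def fchFin (m : ℕ) (g r : ℕ → ℝ) (zd : ℕ) : Finset ℕ :=
  (Finset.Icc 1 m).filter (fun z => p m g r z = zd)

/-- The cost `r̃(X)(J)` charged to the job `J` of the job set `X`. -/
def charge (m : ℕ) (g r : ℕ → ℝ) (s : ι → ℝ) (X : Finset ι) (J : ι) : ℝ :=
  let zd := zdia m g r s X
  let ρ : ℕ → ℝ := fun i => r i / g i
  let Hh := X.filter (fun J' => mty m g s J' = zd)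
  let c : ℝ := Ssum s Hh * ρ zd + ∑ i ∈ fchFin m g r zd, SH m g r s X i * ρ i
  if mty m g s J ∈ A m g r zd then
    if g zd ≤ SH m g r s X zd then s J * ρ zd
    else if r zd < c then
      if mty m g s J = zd then s J * ρ zd
      else
        s J * (ρ (chil m g r zd (mty m g s J)) -
          (ρ (chil m g r zd (mty m g s J)) - ρ zd) *
            ((c - r zd) /
              (∑ i ∈ fchFin m g r zd, ∑ J' ∈ H m g r s i X, s J' * (ρ i - ρ zd))))
    else
      if mty m g s J = zd then s J * ρ zd * (1 + (r zd - c) / (Ssum s Hh * ρ zd))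
      else s J * ρ (chil m g r zd (mty m g s J))
  else s J * ρ (idxT m g r zd (mty m g s J))

/-! ### Jobs with active intervals -/

/-- `span(X) := ⋃_{J ∈ X} [Ilo J, Ihi J)`. -/
def spanSet (Ilo Ihi : ι → ℝ) (X : Finset ι) : Set ℝ :=
  ⋃ J ∈ X, Set.Ico (Ilo J) (Ihi J)

/-- `X(t)`: the jobs of `X` active at time `t`. -/
def activeJ (Ilo Ihi : ι → ℝ) (X : Finset ι) (t : ℝ) : Finset ι :=
  X.filter (fun J => Ilo J ≤ t ∧ t < Ihi J)

/-- `X(t) ∪ ℋ(t)` where `ℋ = {F_d(J) : J ∈ X}`: the original jobs are embedded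
via `Sum.inl`, and the artificial job `F_d(J)` (with size `s J` and active set
`[Ihi J, Ihi J + d) ∩ span(X)`) is represented by `Sum.inr J`. -/
def activeJH (Ilo Ihi : ι → ℝ) (X : Finset ι) (d t : ℝ) : Finset (ι ⊕ ι) :=
  (X.image Sum.inl ∪ X.image Sum.inr).filter
    (fun x => Sum.elim
      (fun J => Ilo J ≤ t ∧ t < Ihi J)
      (fun J => (Ihi J ≤ t ∧ t < Ihi J + d) ∧ t ∈ spanSet Ilo Ihi X) x)

end

end BSHM

/-
Two facts carry the proof. First, the charged cost is antitone in the load profile: if for every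
machine type `Y` has at least as much load of exactly this type as `X`, then a job of `Y` is charged
at most as much as a job of `X` of the same size. Indeed `z⋄` can only grow with the loads, because
decency of `cn_z` passes down to smaller loads, both for `z` itself and for the types of `T(z)`
whose capacity is at most the load below `z`. If `z⋄` grows strictly, the rates charged cannot
increase; if it stays the same, both corrections in the charged cost are monotone in the loads.

Second, the jobs active at time `t` embed, with their sizes, into the original and artificial jobs
active at any time `t' ∈ [t, t + d]` of the span. Hence an original job is charged no more once the
artificial jobs are added, and stretching the last unit of the interval of `J` by the factor `d`
onto the interval of `F_d(J)` shows that `F_d(J)` costs at most `d` times as much as `J`.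
-/

namespace BSHM

noncomputable section

section FirstMinimizer

variable {α : Type*} [LinearOrder α] {f : ℕ → α} {a b i j : ℕ}

/-- `i` is the first minimizer of `f` on the interval `[a, b]`. The sets `P`, `A`, `T` and the
functions `idxT`, `chil` are described by first minimizers of the normalized cost rate. -/
structure IsFirstMin (f : ℕ → α) (a b i : ℕ) : Prop where
  mem : i ∈ Set.Icc a b
  lt_of_lt : ∀ j ∈ Set.Ico a i, f i < f j
  le_of_gt : ∀ j ∈ Set.Ioc i b, f i ≤ f j

lemma IsFirstMin.le (h : IsFirstMin f a b i) (hj : j ∈ Set.Icc a b) : f i ≤ f j := by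
  rcases lt_trichotomy j i with hji | rfl | hij
  · exact (h.lt_of_lt j ⟨hj.1, hji⟩).le
  · exact le_rfl
  · exact h.le_of_gt j ⟨hij, hj.2⟩

lemma IsFirstMin.unique (hi : IsFirstMin f a b i) (hj : IsFirstMin f a b j) : i = j := by
  rcases lt_trichotomy i j with hij | hij | hji
  · exact absurd (hi.le hj.mem) (hj.lt_of_lt i ⟨hi.mem.1, hij⟩).not_ge
  · exact hij
  · exact absurd (hj.le hi.mem) (hi.lt_of_lt j ⟨hj.mem.1, hji⟩).not_ge

lemma exists_isFirstMin (f : ℕ → α) (hab : a ≤ b) : ∃ i, IsFirstMin f a b i := by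
  obtain ⟨i, hi, hmin⟩ := exists_min_image (Icc a b) (fun i => toLex (f i, i))
    (nonempty_Icc.2 hab)
  rw [Finset.mem_Icc] at hi
  have hlex : ∀ j ∈ Set.Icc a b, f i < f j ∨ f i = f j ∧ i ≤ j := fun j hj =>
    Prod.Lex.toLex_le_toLex.1 (hmin j (Finset.mem_Icc.2 hj))
  refine ⟨i, hi, fun j hj => ?_, fun j hj => ?_⟩
  · exact (hlex j ⟨hj.1, hj.2.le.trans hi.2⟩).resolve_right fun h => h.2.not_gt hj.2
  · exact (hlex j ⟨hi.1.trans hj.1.le, hj.2⟩).elim le_of_lt fun h => h.1.le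

end FirstMinimizer

/-- The normalized cost rate of a machine type: its cost rate per unit of capacity. -/
def rate (g r : ℕ → ℝ) (i : ℕ) : ℝ := r i / g i

section Forest

variable {m : ℕ} {g r : ℕ → ℝ} {i j k b z : ℕ}

lemma p_mem_pset (h : pdef m g r i) :
    p m g r i ≤ m ∧ i < p m g r i ∧ rate g r (p m g r i) < rate g r i :=
  Nat.sInf_mem h

lemma p_le (hjm : j ≤ m) (hij : i < j) (hrate : rate g r j < rate g r i) :
    pdef m g r i ∧ p m g r i ≤ j :=
  ⟨⟨j, hjm, hij, hrate⟩, Nat.sInf_le ⟨hjm, hij, hrate⟩⟩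

lemma p_eq_zero (h : ¬ pdef m g r i) : p m g r i = 0 :=
  Nat.sInf_eq_zero.2 (Or.inr (Set.not_nonempty_iff_eq_empty.1 h))

lemma rate_le_of_lt_p (h : pdef m g r i) (hij : i < j) (hj : j < p m g r i) :
    rate g r i ≤ rate g r j := by
  by_contra! hlt
  exact (p_le (hj.le.trans (p_mem_pset h).1) hij hlt).2.not_gt hj

lemma p_eq_iff (hz : z ∈ Set.Icc 1 m) :
    p m g r i = z ↔
      i < z ∧ rate g r z < rate g r i ∧ ∀ j ∈ Set.Ioo i z, rate g r i ≤ rate g r j := by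
  constructor
  · rintro rfl
    have hdef : pdef m g r i := by
      by_contra hdef
      exact (p_eq_zero hdef).not_gt hz.1
    exact ⟨(p_mem_pset hdef).2.1, (p_mem_pset hdef).2.2,
      fun j hj => rate_le_of_lt_p hdef hj.1 hj.2⟩
  · rintro ⟨hiz, hrate, hmin⟩
    obtain ⟨hdef, hle⟩ := p_le hz.2 hiz hrate
    refine hle.eq_of_not_lt fun hlt => ?_
    exact (hmin _ ⟨(p_mem_pset hdef).2.1, hlt⟩).not_gt (p_mem_pset hdef).2.2

lemma mem_P_iff (hk : k ≤ m) :
    z ∈ P m g r k ↔ z ∈ Set.Icc k m ∧ ∀ j ∈ Set.Ico k z, rate g r z < rate g r j := by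
  constructor
  · intro h
    induction (show Relation.ReflTransGen (pstep m g r) k z from h) with
    | refl => exact ⟨⟨le_rfl, hk⟩, fun j hj => absurd hj.1 hj.2.not_ge⟩
    | @tail b c hkb hstep ih =>
      obtain ⟨hdef, rfl⟩ := hstep
      obtain ⟨hb, hbmin⟩ := ih hkb
      obtain ⟨hpm, hbp, hrate⟩ := p_mem_pset hdef
      refine ⟨⟨hb.1.trans hbp.le, hpm⟩, fun j hj => ?_⟩
      rcases lt_trichotomy j b with hjb | rfl | hbj
      · exact hrate.trans (hbmin j ⟨hj.1, hjb⟩)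
      · exact hrate
      · exact hrate.trans_le (rate_le_of_lt_p hdef hbj hj.2)
  · rintro ⟨hz, hmin⟩
    induction hn : z - k using Nat.strong_induction_on generalizing k with
    | _ n ih =>
      rcases hz.1.eq_or_lt with rfl | hkz
      · exact Relation.ReflTransGen.refl
      · obtain ⟨hdef, hpz⟩ := p_le hz.2 hkz (hmin k ⟨le_rfl, hkz⟩)
        have hkp := (p_mem_pset hdef).2.1
        exact Relation.ReflTransGen.head ⟨hdef, rfl⟩
          (ih (z - p m g r k) (by omega) (hpz.trans hz.2) ⟨hpz, hz.2⟩
            (fun j hj => hmin j ⟨hkp.le.trans hj.1, hj.2⟩) rfl)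

lemma mem_A_iff :
    k ∈ A m g r z ↔
      1 ≤ k ∧ z ∈ Set.Icc k m ∧ ∀ j ∈ Set.Ico k z, rate g r z < rate g r j := by
  constructor
  · rintro ⟨hk, hkm, hz⟩
    exact ⟨hk, (mem_P_iff hkm).1 hz⟩
  · rintro ⟨hk, hz, hmin⟩
    have hkm := hz.1.trans hz.2
    exact ⟨hk, hkm, (mem_P_iff hkm).2 ⟨hz, hmin⟩⟩

lemma mem_Icc_of_mem_A (h : k ∈ A m g r z) : z ∈ Set.Icc 1 m :=
  have hA := mem_A_iff.1 h
  ⟨hA.1.trans hA.2.1.1, hA.2.1.2⟩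

lemma self_mem_A (hz : z ∈ Set.Icc 1 m) : z ∈ A m g r z :=
  ⟨hz.1, hz.2, Relation.ReflTransGen.refl⟩

lemma rate_le_of_p_eq (hzm : z ≤ m) (hp : p m g r i = p m g r z) (hij : i < j) (hjz : j ≤ z) :
    rate g r i ≤ rate g r j := by
  by_contra! hlt
  obtain ⟨hdef, hpj⟩ := p_le (hjz.trans hzm) hij hlt
  have hip := (p_mem_pset hdef).2.1
  by_cases hdefz : pdef m g r z
  · have := (p_mem_pset hdefz).2.1
    omega
  · have := p_eq_zero hdefz
    omega

/-- The witness is the last ancestor of `k` before the common parent: the first minimizer of the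
rate on `[k, p i)`, or on `[k, m]` when `i` has no parent. -/
lemma exists_mem_P_p_eq (hkm : k ≤ m) (hik : i < k)
    (hmin : ∀ j ∈ Set.Ioc i k, rate g r i ≤ rate g r j) :
    ∃ z ∈ P m g r k, p m g r i = p m g r z := by
  by_cases hdef : pdef m g r i
  · obtain ⟨hpm, hip, hrate⟩ := p_mem_pset hdef
    have hkp : k < p m g r i := by
      by_contra! hle
      exact (hmin _ ⟨hip, hle⟩).not_gt hrate
    obtain ⟨z, hz⟩ := exists_isFirstMin (rate g r) (Nat.le_sub_one_of_lt hkp)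
    have hzp : z < p m g r i := by have := hz.mem.2; omega
    refine ⟨z, (mem_P_iff hkm).2 ⟨⟨hz.mem.1, hzp.le.trans hpm⟩, hz.lt_of_lt⟩, ?_⟩
    refine ((p_eq_iff ⟨by omega, hpm⟩).2 ⟨hzp, ?_, fun j hj => ?_⟩).symm
    · exact hrate.trans_le (rate_le_of_lt_p hdef (hik.trans_le hz.mem.1) hzp)
    · exact hz.le_of_gt j ⟨hj.1, Nat.le_sub_one_of_lt hj.2⟩
  · obtain ⟨z, hz⟩ := exists_isFirstMin (rate g r) hkm
    refine ⟨z, (mem_P_iff hkm).2 ⟨hz.mem, hz.lt_of_lt⟩, ?_⟩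
    rw [p_eq_zero hdef, p_eq_zero]
    rintro ⟨j, hjm, hzj, hlt⟩
    exact (hz.le_of_gt j ⟨hzj, hjm⟩).not_gt hlt

lemma mem_T_iff (hk : k ∈ Set.Icc 1 m) :
    i ∈ T m g r k ↔ i ∈ Set.Icc 1 k ∧ ∀ j ∈ Set.Ioc i k, rate g r i ≤ rate g r j := by
  have hT : i ∈ T m g r k ↔ i = k ∨ ∃ z ∈ P m g r k, i ∈ y m g r z := by simp [T]
  rw [hT]
  constructor
  · rintro (rfl | ⟨z, hz, hi, -, hiz, hp⟩)
    · exact ⟨⟨hk.1, le_rfl⟩, fun j hj => absurd hj.1 hj.2.not_gt⟩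
    · obtain ⟨hkz, hmin⟩ := (mem_P_iff hk.2).1 hz
      refine ⟨⟨hi, ?_⟩, fun j hj => rate_le_of_p_eq hkz.2 hp hj.1 (hj.2.trans hkz.1)⟩
      by_contra! hki
      exact (rate_le_of_p_eq hkz.2 hp hiz le_rfl).not_gt (hmin i ⟨hki.le, hiz⟩)
  · rintro ⟨hi, hmin⟩
    rcases hi.2.eq_or_lt with rfl | hik
    · exact Or.inl rfl
    · obtain ⟨z, hz, hp⟩ := exists_mem_P_p_eq hk.2 hik hmin
      have hkz := ((mem_P_iff hk.2).1 hz).1.1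
      exact Or.inr ⟨z, hz, hi.1, hik.le.trans hk.2, hik.trans_le hkz, hp⟩

lemma mem_TIcc_iff (hk : k ∈ Set.Icc 1 m) :
    i ∈ TIcc m g r k ↔ i ∈ Set.Icc 1 k ∧ ∀ j ∈ Set.Ioc i k, rate g r i ≤ rate g r j := by
  rw [← mem_T_iff hk, TIcc, mem_filter, and_iff_right_iff_imp]
  intro hi
  have hik := ((mem_T_iff hk).1 hi).1
  exact mem_insert_of_mem (Finset.mem_Icc.2 ⟨hik.1, hik.2.trans hk.2⟩)

lemma mem_T_of_mem_TIcc (hi : i ∈ TIcc m g r k) : i ∈ T m g r k :=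
  (mem_filter.1 hi).2

lemma self_mem_TIcc (k : ℕ) : k ∈ TIcc m g r k :=
  mem_filter.2 ⟨mem_insert_self _ _, Or.inl rfl⟩

lemma mem_Icc_of_mem_TIcc (hk : k ∈ Set.Icc 1 m) (hi : i ∈ TIcc m g r k) : i ∈ Set.Icc 1 m :=
  have hik := ((mem_TIcc_iff hk).1 hi).1
  ⟨hik.1, hik.2.trans hk.2⟩

lemma rate_le_of_mem_TIcc (hk : k ∈ Set.Icc 1 m) (hi : i ∈ TIcc m g r k) :
    rate g r i ≤ rate g r k := by
  obtain ⟨hik, hmin⟩ := (mem_TIcc_iff hk).1 hi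
  rcases hik.2.eq_or_lt with rfl | hlt
  · exact le_rfl
  · exact hmin k ⟨hlt, le_rfl⟩

lemma TIcc_subset_TIcc (hb : b ∈ Set.Icc 1 m) (hi : i ∈ TIcc m g r b) :
    TIcc m g r i ⊆ TIcc m g r b := by
  intro k hk
  have him := mem_Icc_of_mem_TIcc hb hi
  obtain ⟨hib, hmin⟩ := (mem_TIcc_iff hb).1 hi
  obtain ⟨hki, hkmin⟩ := (mem_TIcc_iff him).1 hk
  refine (mem_TIcc_iff hb).2 ⟨⟨hki.1, hki.2.trans hib.2⟩, fun j hj => ?_⟩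
  rcases le_or_gt j i with hji | hij
  · exact hkmin j ⟨hj.1, hji⟩
  · exact (rate_le_of_mem_TIcc him hk).trans (hmin j ⟨hij, hj.2⟩)

lemma mem_T_and_mem_A_iff (hk : 1 ≤ k) (hkb : k ≤ b) (hbm : b ≤ m) :
    i ∈ T m g r b ∧ k ∈ A m g r i ↔ IsFirstMin (rate g r) k b i := by
  rw [mem_T_iff ⟨hk.trans hkb, hbm⟩, mem_A_iff]
  constructor
  · rintro ⟨⟨hib, hle⟩, -, hki, hlt⟩
    exact ⟨⟨hki.1, hib.2⟩, hlt, hle⟩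
  · rintro ⟨hi, hlt, hle⟩
    exact ⟨⟨⟨hk.trans hi.1, hi.2⟩, hle⟩, hk, ⟨hi.1, hi.2.trans hbm⟩, hlt⟩

lemma isFirstMin_idxT (hk : 1 ≤ k) (hkb : k ≤ b) (hbm : b ≤ m) :
    IsFirstMin (rate g r) k b (idxT m g r b k) := by
  obtain ⟨i, hi⟩ := exists_isFirstMin (rate g r) hkb
  exact (mem_T_and_mem_A_iff hk hkb hbm).1 (Nat.sInf_mem
    (s := {i | i ∈ T m g r b ∧ k ∈ A m g r i}) ⟨i, (mem_T_and_mem_A_iff hk hkb hbm).2 hi⟩)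

lemma p_eq_and_mem_A_iff (hz : z ∈ Set.Icc 1 m) :
    p m g r i = z ∧ k ∈ A m g r i ↔
      (k ∈ A m g r z ∧ k ≠ z) ∧ IsFirstMin (rate g r) k (z - 1) i := by
  rw [p_eq_iff hz, mem_A_iff, mem_A_iff]
  constructor
  · rintro ⟨⟨hiz, hzi, hle⟩, hk, hki, hlt⟩
    refine ⟨⟨⟨hk, ⟨hki.1.trans hiz.le, hz.2⟩, fun j hj => ?_⟩, (hki.1.trans_lt hiz).ne⟩,
      ⟨hki.1, Nat.le_sub_one_of_lt hiz⟩, hlt, fun j hj => ?_⟩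
    · rcases lt_trichotomy j i with hji | rfl | hij
      · exact hzi.trans (hlt j ⟨hj.1, hji⟩)
      · exact hzi
      · exact hzi.trans_le (hle j ⟨hij, hj.2⟩)
    · exact hle j ⟨hj.1, by have := hj.2; have := hz.1; omega⟩
  · rintro ⟨⟨⟨hk, -, hzlt⟩, -⟩, hki, hlt, hle⟩
    have hiz : i < z := by have := hki.2; have := hz.1; omega
    exact ⟨⟨hiz, hzlt i ⟨hki.1, hiz⟩, fun j hj => hle j ⟨hj.1, Nat.le_sub_one_of_lt hj.2⟩⟩,
      hk, ⟨hki.1, hiz.le.trans hz.2⟩, hlt⟩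

lemma chil_spec (hk : k ∈ A m g r z) (hkz : k ≠ z) :
    p m g r (chil m g r z k) = z ∧ k ∈ A m g r (chil m g r z k) := by
  have hzm := mem_Icc_of_mem_A hk
  have hkz' : k ≤ z - 1 := by have := (mem_A_iff.1 hk).2.1.1; omega
  obtain ⟨i, hi⟩ := exists_isFirstMin (rate g r) hkz'
  exact Nat.sInf_mem (s := {i | p m g r i = z ∧ k ∈ A m g r i})
    ⟨i, (p_eq_and_mem_A_iff hzm).2 ⟨⟨hk, hkz⟩, hi⟩⟩

lemma chil_mem_fchFin (hk : k ∈ A m g r z) (hkz : k ≠ z) :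
    chil m g r z k ∈ fchFin m g r z :=
  mem_filter.2 ⟨Finset.mem_Icc.2 (mem_Icc_of_mem_A (chil_spec hk hkz).2), (chil_spec hk hkz).1⟩

lemma rate_chil_le (hk : k ∈ A m g r z) (hkj : k ≤ j) (hjz : j < z) :
    rate g r (chil m g r z k) ≤ rate g r j :=
  ((p_eq_and_mem_A_iff (mem_Icc_of_mem_A hk)).1 (chil_spec hk (hkj.trans_lt hjz).ne)).2.le
    ⟨hkj, Nat.le_sub_one_of_lt hjz⟩

lemma rate_lt_of_mem_fchFin (hz : z ∈ Set.Icc 1 m) (hi : i ∈ fchFin m g r z) :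
    rate g r z < rate g r i :=
  ((p_eq_iff hz).1 (mem_filter.1 hi).2).2.1

end Forest

section Loads

variable {ι κ : Type*} {m : ℕ} {g r : ℕ → ℝ} {s : ι → ℝ} {s' : κ → ℝ} {X : Finset ι} {Y : Finset κ}
  {J : ι} {J' : κ} {i k z : ℕ}

lemma rate_pos (hg : ∀ i ∈ Set.Icc 1 m, 0 < g i) (hr : ∀ i ∈ Set.Icc 1 m, 0 < r i)
    (hz : z ∈ Set.Icc 1 m) : 0 < rate g r z :=
  div_pos (hr z hz) (hg z hz)

lemma mty_mem (hm : 1 ≤ m) (hJ : s J ≤ g m) : mty m g s J ∈ Set.Icc 1 m := by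
  obtain ⟨h1, hle, -⟩ := Nat.sInf_mem (s := {z | 1 ≤ z ∧ z ≤ m ∧ s J ≤ g z}) ⟨m, hm, le_rfl, hJ⟩
  exact ⟨h1, hle⟩

lemma lt_size_of_lt_mty (hi : i ∈ Set.Icc 1 m) (h : i < mty m g s J) : g i < s J := by
  by_contra! hle
  exact (Nat.sInf_le (s := {z | 1 ≤ z ∧ z ≤ m ∧ s J ≤ g z}) ⟨hi.1, hi.2, hle⟩).not_gt h

lemma mty_congr (h : s' J' = s J) : mty m g s' J' = mty m g s J := by
  simp only [mty, h]

/-- The total size of the jobs of exact machine type `z`; as a function of `z`, this is the load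
profile through which the charges of different job sets are compared. -/
def exactLoad (m : ℕ) (g : ℕ → ℝ) (s : ι → ℝ) (X : Finset ι) (z : ℕ) : ℝ :=
  Ssum s {J ∈ X | mty m g s J = z}

/-- The subtree rooted at `z`, i.e. the set `A m g r z`, as a `Finset`. -/
def subtree (m : ℕ) (g r : ℕ → ℝ) (z : ℕ) : Finset ℕ :=
  {k ∈ Finset.Icc 1 m | k ∈ A m g r z}

lemma mem_subtree : k ∈ subtree m g r z ↔ k ∈ A m g r z := by
  rw [subtree, mem_filter, and_iff_right_iff_imp]
  exact fun hk => Finset.mem_Icc.2 ⟨hk.1, hk.2.1⟩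

lemma SH_eq_sum_exactLoad :
    SH m g r s X z = ∑ k ∈ subtree m g r z, exactLoad m g s X k := by
  have hmaps : ∀ J ∈ H m g r s z X, mty m g s J ∈ subtree m g r z := fun J hJ =>
    mem_subtree.2 (mem_filter.1 hJ).2
  rw [SH, Ssum, ← sum_fiberwise_of_maps_to hmaps]
  refine sum_congr rfl fun k hk => sum_congr ?_ fun _ _ => rfl
  rw [H, filter_filter]
  refine filter_congr fun J _ => and_iff_right_of_imp ?_
  rintro rfl
  exact mem_subtree.1 hk

lemma subtree_eq_insert (hz : z ∈ Set.Icc 1 m) :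
    subtree m g r z = insert z ((fchFin m g r z).biUnion (subtree m g r)) := by
  ext k
  simp only [Finset.mem_insert, mem_biUnion, mem_subtree]
  constructor
  · intro hk
    exact or_iff_not_imp_left.2 fun hkz => ⟨_, chil_mem_fchFin hk hkz, (chil_spec hk hkz).2⟩
  · rintro (rfl | ⟨i, hi, hk⟩)
    · exact self_mem_A hz
    · exact ((p_eq_and_mem_A_iff hz).1 ⟨(mem_filter.1 hi).2, hk⟩).1.1

lemma SH_eq_exactLoad_add (hz : z ∈ Set.Icc 1 m) :
    SH m g r s X z = exactLoad m g s X z + ∑ i ∈ fchFin m g r z, SH m g r s X i := by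
  have hchild : ∀ i ∈ fchFin m g r z, ∀ k ∈ subtree m g r i,
      k ≠ z ∧ IsFirstMin (rate g r) k (z - 1) i := fun i hi k hk =>
    have h := (p_eq_and_mem_A_iff hz).1 ⟨(mem_filter.1 hi).2, mem_subtree.1 hk⟩
    ⟨h.1.2, h.2⟩
  have hdisj : (fchFin m g r z : Set ℕ).PairwiseDisjoint (subtree m g r) := by
    refine fun i hi j hj hij => disjoint_left.2 fun k hki hkj => hij ?_
    exact (hchild i hi k hki).2.unique (hchild j hj k hkj).2
  have hz' : z ∉ (fchFin m g r z).biUnion (subtree m g r) := fun h => by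
    obtain ⟨i, hi, hk⟩ := mem_biUnion.1 h
    exact (hchild i hi z hk).1 rfl
  rw [SH_eq_sum_exactLoad, subtree_eq_insert hz, sum_insert hz', sum_biUnion hdisj]
  simp only [SH_eq_sum_exactLoad]

lemma exactLoad_nonneg (hX : ∀ J ∈ X, 0 ≤ s J) (z : ℕ) : 0 ≤ exactLoad m g s X z :=
  sum_nonneg fun J hJ => hX J (mem_filter.1 hJ).1

lemma SH_nonneg (hX : ∀ J ∈ X, 0 ≤ s J) (z : ℕ) : 0 ≤ SH m g r s X z :=
  sum_nonneg fun J hJ => hX J (mem_filter.1 hJ).1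

lemma size_le_exactLoad (hX : ∀ J ∈ X, 0 ≤ s J) (hJ : J ∈ X) :
    s J ≤ exactLoad m g s X (mty m g s J) :=
  single_le_sum (fun J hJ => hX J (mem_filter.1 hJ).1) (mem_filter.2 ⟨hJ, rfl⟩)

lemma size_le_SH (hX : ∀ J ∈ X, 0 ≤ s J) (hJ : J ∈ X) (hz : mty m g s J ∈ A m g r z) :
    s J ≤ SH m g r s X z :=
  single_le_sum (fun J hJ => hX J (mem_filter.1 hJ).1) (mem_filter.2 ⟨hJ, hz⟩)

lemma SH_mono (hXY : ∀ z, exactLoad m g s X z ≤ exactLoad m g s' Y z) (z : ℕ) :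
    SH m g r s X z ≤ SH m g r s' Y z := by
  rw [SH_eq_sum_exactLoad, SH_eq_sum_exactLoad]
  exact sum_le_sum fun k _ => hXY k

lemma mty_le_k0f (hJ : J ∈ X) : mty m g s J ≤ k0f m g s X :=
  le_sup hJ

lemma exists_mty_eq_k0f (hX : X.Nonempty) : ∃ J ∈ X, mty m g s J = k0f m g s X := by
  obtain ⟨J, hJ, h⟩ := exists_mem_eq_sup X hX (fun J => mty m g s J)
  exact ⟨J, hJ, h.symm⟩

lemma k0f_mono (hX : ∀ J ∈ X, 0 < s J)
    (hXY : ∀ z, exactLoad m g s X z ≤ exactLoad m g s' Y z) :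
    k0f m g s X ≤ k0f m g s' Y := by
  refine Finset.sup_le fun J hJ => ?_
  have hpos : 0 < exactLoad m g s' Y (mty m g s J) :=
    (hX J hJ).trans_le ((size_le_exactLoad (fun J hJ => (hX J hJ).le) hJ).trans (hXY _))
  obtain ⟨J', hJ', -⟩ := exists_ne_zero_of_sum_ne_zero hpos.ne'
  obtain ⟨hJ', hmty⟩ := mem_filter.1 hJ'
  exact hmty ▸ mty_le_k0f hJ'

end Loads

section Decency

variable {ι κ : Type*} {m : ℕ} {g r : ℕ → ℝ} {s : ι → ℝ} {s' : κ → ℝ} {X : Finset ι} {Y : Finset κ}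
  {J : ι} {i b z zt : ℕ}

/-- The capacity of the machines that the configuration `cn m g r s X z` uses of its top type `z`:
the load of the subtree rooted at `z`, rounded up to a multiple of `g z`. -/
def topCapacity (m : ℕ) (g r : ℕ → ℝ) (s : ι → ℝ) (X : Finset ι) (z : ℕ) : ℝ :=
  ⌈SH m g r s X z / g z⌉₊ * g z

/-- The load of the subtree rooted at `i` that is left over once the top machines of the
configuration `cn m g r s X z` are filled in decreasing order of the types in `T m g r z`. -/
def residual (m : ℕ) (g r : ℕ → ℝ) (s : ι → ℝ) (X : Finset ι) (z i : ℕ) : ℝ :=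
  min (SH m g r s X i)
    (max 0 (∑ k ∈ TIcc m g r z with i ≤ k, SH m g r s X k - topCapacity m g r s X z))

/-- The machine types `T(z) ∩ A(zt)` that are compared with type `zt` in the decency of a
configuration with top type `z`. -/
def localT (m : ℕ) (g r : ℕ → ℝ) (z zt : ℕ) : Finset ℕ :=
  {k ∈ TIcc m g r z | k ∈ A m g r zt}

/-- The cost of the machines of types in `localT m g r z zt` under `cn m g r s X z`. -/
def localCost (m : ℕ) (g r : ℕ → ℝ) (s : ι → ℝ) (X : Finset ι) (z zt : ℕ) : ℝ :=
  ∑ k ∈ localT m g r z zt, cn m g r s X z k * r k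

lemma sum_sub_le_sum_min_max {α : Type*} [LinearOrder α] (F : Finset α) {l : α → ℝ}
    (hl : ∀ i ∈ F, 0 ≤ l i) {B : ℝ} (hB : 0 ≤ B) :
    ∑ i ∈ F, l i - B ≤ ∑ i ∈ F, min (l i) (max 0 (∑ k ∈ F with i ≤ k, l k - B)) := by
  induction F using Finset.induction_on_min with
  | empty => simpa using hB
  | insert a F ha ih =>
    have haF : a ∉ F := fun h => (ha a h).false
    have hl' : ∀ i ∈ F, 0 ≤ l i := fun i hi => hl i (mem_insert_of_mem hi)
    have hfirst : {k ∈ insert a F | a ≤ k} = insert a F :=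
      filter_true_of_mem fun k hk => (Finset.mem_insert.1 hk).elim Eq.ge fun h => (ha k h).le
    have hrest : ∀ i ∈ F, {k ∈ insert a F | i ≤ k} = {k ∈ F | i ≤ k} := fun i hi =>
      by rw [filter_insert, if_neg (ha i hi).not_ge]
    have htail_eq : ∑ i ∈ F, min (l i) (max 0 (∑ k ∈ insert a F with i ≤ k, l k - B)) =
        ∑ i ∈ F, min (l i) (max 0 (∑ k ∈ F with i ≤ k, l k - B)) :=
      sum_congr rfl fun i hi => by rw [hrest i hi]
    rw [sum_insert haF, sum_insert haF, hfirst, sum_insert haF, htail_eq]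
    have htail_nonneg : 0 ≤ ∑ i ∈ F, min (l i) (max 0 (∑ k ∈ F with i ≤ k, l k - B)) :=
      sum_nonneg fun i hi => le_min (hl' i hi) (le_max_left _ _)
    have htail := ih hl'
    rcases min_choice (l a) (max 0 (l a + ∑ k ∈ F, l k - B)) with h | h
    · rw [h]
      linarith
    · rw [h]
      linarith [le_max_right 0 (l a + ∑ k ∈ F, l k - B)]

lemma cn_mul_cost (hX : ∀ J ∈ X, 0 ≤ s J) (hi : i ∈ TIcc m g r z) (hiz : i ≠ z) :
    cn m g r s X z i * r i = residual m g r s X z i * rate g r i := by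
  have hsplit : ∑ k ∈ TIcc m g r z with i ≤ k, SH m g r s X k =
      SH m g r s X i + ∑ k ∈ TIcc m g r z with i < k, SH m g r s X k := by
    rw [← sum_insert (by simp)]
    congr 1
    ext k
    simp only [mem_filter, Finset.mem_insert, le_iff_eq_or_lt]
    grind
  have hSH := SH_nonneg (m := m) (g := g) (r := r) hX i
  have hcn : cn m g r s X z i = residual m g r s X z i / g i := by
    simp only [cn, residual, topCapacity, if_neg hiz, if_pos (mem_T_of_mem_TIcc hi), hsplit]
    split_ifs with h1 h2
    · rw [max_eq_right (by linarith), min_eq_right (by linarith)]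
    · rw [max_eq_right (by linarith), min_eq_left (by linarith)]
    · rw [max_eq_left (by grind), min_eq_right hSH, zero_div]
  rw [hcn, rate, div_mul_eq_mul_div, mul_div_assoc]

lemma cn_self : cn m g r s X z z = ⌈SH m g r s X z / g z⌉₊ := by
  simp [cn]

lemma SH_le_topCapacity (hz : 0 < g z) : SH m g r s X z ≤ topCapacity m g r s X z :=
  (div_le_iff₀ hz).1 (Nat.le_ceil _)

lemma topCapacity_le (hX : ∀ J ∈ X, 0 ≤ s J) (hz : 0 < g z) :
    topCapacity m g r s X z ≤ SH m g r s X z + g z := by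
  have hceil : (⌈SH m g r s X z / g z⌉₊ : ℝ) ≤ SH m g r s X z / g z + 1 :=
    (Nat.ceil_lt_add_one (div_nonneg (SH_nonneg hX z) hz.le)).le
  calc topCapacity m g r s X z
    _ ≤ (SH m g r s X z / g z + 1) * g z := mul_le_mul_of_nonneg_right hceil hz.le
    _ = SH m g r s X z + g z := by rw [add_mul, div_mul_cancel₀ _ hz.ne', one_mul]

lemma residual_self (hX : ∀ J ∈ X, 0 ≤ s J) (hz : z ∈ Set.Icc 1 m) (hgz : 0 < g z) :
    residual m g r s X z z = 0 := by
  have htop : {k ∈ TIcc m g r z | z ≤ k} = {z} := by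
    ext k
    rw [mem_filter, Finset.mem_singleton]
    constructor
    · exact fun hk => ((mem_TIcc_iff hz).1 hk.1).1.2.antisymm hk.2
    · rintro rfl
      exact ⟨self_mem_TIcc k, le_rfl⟩
  rw [residual, htop, sum_singleton, max_eq_left (sub_nonpos.2 (SH_le_topCapacity hgz)),
    min_eq_right (SH_nonneg hX z)]

lemma self_mem_localT (hz : z ∈ A m g r zt) : z ∈ localT m g r z zt :=
  mem_filter.2 ⟨self_mem_TIcc z, hz⟩

lemma localCost_eq (hX : ∀ J ∈ X, 0 ≤ s J) (hgz : 0 < g z) (hz : z ∈ A m g r zt) :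
    localCost m g r s X z zt = topCapacity m g r s X z * rate g r z +
      ∑ i ∈ (localT m g r z zt).erase z, residual m g r s X z i * rate g r i := by
  rw [localCost, ← add_sum_erase _ _ (self_mem_localT hz), cn_self, topCapacity, rate,
    mul_assoc, mul_div_cancel₀ _ hgz.ne']
  congr 1
  refine sum_congr rfl fun i hi => ?_
  obtain ⟨hiz, hi⟩ := mem_erase.1 hi
  exact cn_mul_cost hX (mem_filter.1 hi).1 hiz

lemma residual_le_SH (i : ℕ) : residual m g r s X z i ≤ SH m g r s X i :=
  min_le_left _ _

lemma sum_SH_sub_residual_le (hX : ∀ J ∈ X, 0 ≤ s J) (hgz : 0 < g z) :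
    ∑ i ∈ localT m g r z zt, (SH m g r s X i - residual m g r s X z i) ≤
      topCapacity m g r s X z := by
  have hcap : 0 ≤ topCapacity m g r s X z := (SH_nonneg hX z).trans (SH_le_topCapacity hgz)
  have htotal : ∑ i ∈ TIcc m g r z, SH m g r s X i - topCapacity m g r s X z ≤
      ∑ i ∈ TIcc m g r z, residual m g r s X z i :=
    sum_sub_le_sum_min_max _ (fun i _ => SH_nonneg hX i) hcap
  calc ∑ i ∈ localT m g r z zt, (SH m g r s X i - residual m g r s X z i)
    _ ≤ ∑ i ∈ TIcc m g r z, (SH m g r s X i - residual m g r s X z i) :=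
      sum_le_sum_of_subset_of_nonneg (filter_subset _ _) fun i _ _ =>
        sub_nonneg.2 (residual_le_SH i)
    _ ≤ topCapacity m g r s X z := by
      rw [sum_sub_distrib]
      linarith

/-- Moving load from a type `i ∈ T m g r z` up to the type `z` does not decrease its cost, because
`rate i ≤ rate z`. -/
lemma sum_SH_mul_rate_le_localCost (hg : ∀ i ∈ Set.Icc 1 m, 0 < g i)
    (hr : ∀ i ∈ Set.Icc 1 m, 0 < r i) (hX : ∀ J ∈ X, 0 ≤ s J) (hz : z ∈ Set.Icc 1 m)
    (hzt : z ∈ A m g r zt) :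
    ∑ i ∈ localT m g r z zt, SH m g r s X i * rate g r i ≤ localCost m g r s X z zt := by
  calc ∑ i ∈ localT m g r z zt, SH m g r s X i * rate g r i
    _ = ∑ i ∈ localT m g r z zt, (SH m g r s X i - residual m g r s X z i) * rate g r i +
        ∑ i ∈ localT m g r z zt, residual m g r s X z i * rate g r i := by
      rw [← sum_add_distrib]
      exact sum_congr rfl fun i _ => by ring
    _ ≤ ∑ i ∈ localT m g r z zt, (SH m g r s X i - residual m g r s X z i) * rate g r z +
        ∑ i ∈ localT m g r z zt, residual m g r s X z i * rate g r i := by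
      gcongr with i hi
      · exact sub_nonneg.2 (residual_le_SH i)
      · exact rate_le_of_mem_TIcc hz (mem_filter.1 hi).1
    _ ≤ topCapacity m g r s X z * rate g r z +
        ∑ i ∈ localT m g r z zt, residual m g r s X z i * rate g r i := by
      rw [← sum_mul]
      gcongr
      · exact (rate_pos hg hr hz).le
      · exact sum_SH_sub_residual_le hX (hg z hz)
    _ = localCost m g r s X z zt := by
      rw [localCost_eq hX (hg z hz) hzt, ← add_sum_erase _ _ (self_mem_localT hzt),
        residual_self hX hz (hg z hz), zero_mul, zero_add]

lemma localCost_le (hg : ∀ i ∈ Set.Icc 1 m, 0 < g i)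
    (hr : ∀ i ∈ Set.Icc 1 m, 0 < r i) (hX : ∀ J ∈ X, 0 ≤ s J) (hz : z ∈ Set.Icc 1 m)
    (hzt : z ∈ A m g r zt) :
    localCost m g r s X z zt ≤ topCapacity m g r s X z * rate g r z +
      ∑ i ∈ (localT m g r z zt).erase z, SH m g r s X i * rate g r i := by
  rw [localCost_eq hX (hg z hz) hzt]
  gcongr with i hi
  · have := rate_pos hg hr (mem_Icc_of_mem_TIcc hz (mem_filter.1 (mem_of_mem_erase hi)).1)
    exact this.le
  · exact min_le_left _ _

lemma residual_mono (hXY : ∀ z, exactLoad m g s X z ≤ exactLoad m g s' Y z)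
    (htop : topCapacity m g r s X z = topCapacity m g r s' Y z) (i : ℕ) :
    residual m g r s X z i ≤ residual m g r s' Y z i := by
  unfold residual
  rw [htop]
  gcongr <;> exact SH_mono hXY _

lemma mem_A_of_mem_P (hz : z ∈ Set.Icc 1 m) (hzt : zt ∈ P m g r z) : z ∈ A m g r zt :=
  ⟨hz.1, hz.2, hzt⟩

lemma topCapacity_eq_or_le (hXY : ∀ z, exactLoad m g s X z ≤ exactLoad m g s' Y z)
    (hgz : 0 < g z) :
    topCapacity m g r s X z = topCapacity m g r s' Y z ∨
      topCapacity m g r s X z ≤ SH m g r s' Y z := by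
  have hceil : ⌈SH m g r s X z / g z⌉₊ ≤ ⌈SH m g r s' Y z / g z⌉₊ :=
    Nat.ceil_mono (div_le_div_of_nonneg_right (SH_mono hXY z) hgz.le)
  rcases hceil.eq_or_lt with heq | hlt
  · exact Or.inl (by rw [topCapacity, topCapacity, heq])
  · exact Or.inr ((le_div_iff₀ hgz).1 (Nat.lt_ceil.1 hlt).le)

lemma localCost_mono (hg : ∀ i ∈ Set.Icc 1 m, 0 < g i)
    (hr : ∀ i ∈ Set.Icc 1 m, 0 < r i) (hX : ∀ J ∈ X, 0 ≤ s J) (hY : ∀ J ∈ Y, 0 ≤ s' J)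
    (hXY : ∀ z, exactLoad m g s X z ≤ exactLoad m g s' Y z) (hz : z ∈ Set.Icc 1 m)
    (hzt : z ∈ A m g r zt) :
    localCost m g r s X z zt ≤ localCost m g r s' Y z zt := by
  have hrate : ∀ i ∈ localT m g r z zt, 0 ≤ rate g r i := fun i hi =>
    (rate_pos hg hr (mem_Icc_of_mem_TIcc hz (mem_filter.1 hi).1)).le
  rcases topCapacity_eq_or_le (r := r) hXY (hg z hz) with heq | hle
  · rw [localCost_eq hX (hg z hz) hzt, localCost_eq hY (hg z hz) hzt, heq]
    gcongr with i hi
    · exact hrate i (mem_of_mem_erase hi)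
    · exact residual_mono hXY heq i
  · calc localCost m g r s X z zt
      _ ≤ topCapacity m g r s X z * rate g r z +
          ∑ i ∈ (localT m g r z zt).erase z, SH m g r s X i * rate g r i :=
        localCost_le hg hr hX hz hzt
      _ ≤ SH m g r s' Y z * rate g r z +
          ∑ i ∈ (localT m g r z zt).erase z, SH m g r s' Y i * rate g r i := by
        gcongr with i hi
        · exact (rate_pos hg hr hz).le
        · exact hrate i (mem_of_mem_erase hi)
        · exact SH_mono hXY i
      _ = ∑ i ∈ localT m g r z zt, SH m g r s' Y i * rate g r i :=
        add_sum_erase _ (fun i => SH m g r s' Y i * rate g r i) (self_mem_localT hzt)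
      _ ≤ localCost m g r s' Y z zt := sum_SH_mul_rate_le_localCost hg hr hY hz hzt

lemma decent_anti (hg : ∀ i ∈ Set.Icc 1 m, 0 < g i) (hr : ∀ i ∈ Set.Icc 1 m, 0 < r i)
    (hX : ∀ J ∈ X, 0 ≤ s J) (hY : ∀ J ∈ Y, 0 ≤ s' J)
    (hXY : ∀ z, exactLoad m g s X z ≤ exactLoad m g s' Y z) (hz : z ∈ Set.Icc 1 m)
    (h : decent m g r s' Y z) : decent m g r s X z := fun zt hzt hne =>
  (localCost_mono hg hr hX hY hXY hz (mem_A_of_mem_P hz hzt)).trans (h zt hzt hne)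

lemma lt_of_mem_P_of_mem_TIcc (hb : b ∈ Set.Icc 1 m) (hi : i ∈ TIcc m g r b)
    (hzt : zt ∈ P m g r i) (hne : zt ≠ i) : b < zt := by
  have him := mem_Icc_of_mem_TIcc hb hi
  obtain ⟨hizt, hlt⟩ := (mem_P_iff him.2).1 hzt
  have hizt' : i < zt := lt_of_le_of_ne hizt.1 hne.symm
  by_contra! hle
  exact (hlt i ⟨le_rfl, hizt'⟩).not_ge (((mem_TIcc_iff hb).1 hi).2 zt ⟨hizt', hle⟩)

lemma mem_P_of_mem_TIcc (hb : b ∈ Set.Icc 1 m) (hi : i ∈ TIcc m g r b)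
    (hzt : zt ∈ P m g r i) (hne : zt ≠ i) : zt ∈ P m g r b := by
  have hib := ((mem_TIcc_iff hb).1 hi).1.2
  obtain ⟨hizt, hlt⟩ := (mem_P_iff (hib.trans hb.2)).1 hzt
  exact (mem_P_iff hb.2).2 ⟨⟨(lt_of_mem_P_of_mem_TIcc hb hi hzt hne).le, hizt.2⟩,
    fun j hj => hlt j ⟨hib.trans hj.1, hj.2⟩⟩

lemma localT_subset_erase (hb : b ∈ Set.Icc 1 m) (hi : i ∈ TIcc m g r b) (hib : i ≠ b) :
    localT m g r i zt ⊆ (localT m g r b zt).erase b := by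
  intro k hk
  obtain ⟨hk, hkA⟩ := mem_filter.1 hk
  have hki := ((mem_TIcc_iff (mem_Icc_of_mem_TIcc hb hi)).1 hk).1.2
  have hib' := lt_of_le_of_ne ((mem_TIcc_iff hb).1 hi).1.2 hib
  exact mem_erase.2 ⟨(hki.trans_lt hib').ne, mem_filter.2 ⟨TIcc_subset_TIcc hb hi hk, hkA⟩⟩

lemma localCost_le_of_mem_TIcc (hg : ∀ i ∈ Set.Icc 1 m, 0 < g i)
    (hr : ∀ i ∈ Set.Icc 1 m, 0 < r i) (hX : ∀ J ∈ X, 0 ≤ s J) (hY : ∀ J ∈ Y, 0 ≤ s' J)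
    (hXY : ∀ z, exactLoad m g s X z ≤ exactLoad m g s' Y z) (hb : b ∈ Set.Icc 1 m)
    (hi : i ∈ TIcc m g r b) (hib : i ≠ b) (hload : g i ≤ SH m g r s' Y b)
    (hizt : i ∈ A m g r zt) (hbzt : b ∈ A m g r zt) :
    localCost m g r s X i zt ≤ localCost m g r s' Y b zt := by
  have him := mem_Icc_of_mem_TIcc hb hi
  have hsub : localT m g r i zt ⊆ (localT m g r b zt).erase b := localT_subset_erase hb hi hib
  have hrate : ∀ k ∈ localT m g r b zt, 0 ≤ rate g r k := fun k hk =>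
    (rate_pos hg hr (mem_Icc_of_mem_TIcc hb (mem_filter.1 hk).1)).le
  have htop : g i * rate g r i ≤ SH m g r s' Y b * rate g r b :=
    mul_le_mul hload (rate_le_of_mem_TIcc hb hi) (rate_pos hg hr him).le (SH_nonneg hY b)
  calc localCost m g r s X i zt
    _ ≤ topCapacity m g r s X i * rate g r i +
        ∑ k ∈ (localT m g r i zt).erase i, SH m g r s X k * rate g r k :=
      localCost_le hg hr hX him hizt
    _ ≤ (SH m g r s X i + g i) * rate g r i +
        ∑ k ∈ (localT m g r i zt).erase i, SH m g r s X k * rate g r k := by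
      gcongr
      · exact (rate_pos hg hr him).le
      · exact topCapacity_le hX (hg i him)
    _ = g i * rate g r i + ∑ k ∈ localT m g r i zt, SH m g r s X k * rate g r k := by
      rw [← add_sum_erase _ _ (self_mem_localT hizt)]
      ring
    _ ≤ SH m g r s' Y b * rate g r b +
        ∑ k ∈ (localT m g r b zt).erase b, SH m g r s' Y k * rate g r k := by
      gcongr ?_ + ?_
      calc ∑ k ∈ localT m g r i zt, SH m g r s X k * rate g r k
        _ ≤ ∑ k ∈ localT m g r i zt, SH m g r s' Y k * rate g r k := by
          gcongr with k hk
          · exact hrate k (mem_of_mem_erase (hsub hk))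
          · exact SH_mono hXY k
        _ ≤ _ := sum_le_sum_of_subset_of_nonneg hsub fun k hk _ =>
          mul_nonneg (SH_nonneg hY k) (hrate k (mem_of_mem_erase hk))
    _ = ∑ k ∈ localT m g r b zt, SH m g r s' Y k * rate g r k :=
      add_sum_erase _ (fun k => SH m g r s' Y k * rate g r k) (self_mem_localT hbzt)
    _ ≤ localCost m g r s' Y b zt := sum_SH_mul_rate_le_localCost hg hr hY hb hbzt

lemma decent_of_mem_TIcc (hg : ∀ i ∈ Set.Icc 1 m, 0 < g i) (hr : ∀ i ∈ Set.Icc 1 m, 0 < r i)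
    (hX : ∀ J ∈ X, 0 ≤ s J) (hY : ∀ J ∈ Y, 0 ≤ s' J)
    (hXY : ∀ z, exactLoad m g s X z ≤ exactLoad m g s' Y z) (hb : b ∈ Set.Icc 1 m)
    (hi : i ∈ TIcc m g r b) (hib : i ≠ b) (hload : g i ≤ SH m g r s' Y b)
    (h : decent m g r s' Y b) : decent m g r s X i := fun zt hzt hne =>
  have hbzt := mem_P_of_mem_TIcc hb hi hzt hne
  (localCost_le_of_mem_TIcc hg hr hX hY hXY hb hi hib hload
    (mem_A_of_mem_P (mem_Icc_of_mem_TIcc hb hi) hzt) (mem_A_of_mem_P hb hbzt)).trans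
    (h zt hbzt (lt_of_mem_P_of_mem_TIcc hb hi hzt hne).ne')

end Decency

section TopType

variable {ι κ : Type*} {m : ℕ} {g r : ℕ → ℝ} {s : ι → ℝ} {s' : κ → ℝ} {X : Finset ι} {Y : Finset κ}
  {J : ι} {z : ℕ}

lemma k0f_mem (hm : 1 ≤ m) (hne : X.Nonempty) (hX : ∀ J ∈ X, s J ≤ g m) :
    k0f m g s X ∈ Set.Icc 1 m := by
  obtain ⟨J, hJ, h⟩ := exists_mty_eq_k0f (m := m) (g := g) (s := s) hne
  exact h ▸ mty_mem hm (hX J hJ)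

lemma zdia_spec (hm : 1 ≤ m) (hne : X.Nonempty) (hX : ∀ J ∈ X, s J ≤ g m) :
    zdia m g r s X ∈ P m g r (k0f m g s X) ∧ decent m g r s X (zdia m g r s X) := by
  have hk := k0f_mem hm hne hX
  obtain ⟨z, hz⟩ := exists_isFirstMin (rate g r) hk.2
  refine Nat.sInf_mem (s := {zs | zs ∈ P m g r (k0f m g s X) ∧ decent m g r s X zs})
    ⟨z, (mem_P_iff hk.2).2 ⟨hz.mem, hz.lt_of_lt⟩, fun zt hzt hzne => ?_⟩
  obtain ⟨hzzt, hlt⟩ := (mem_P_iff hz.mem.2).1 hzt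
  have hzzt' : z < zt := lt_of_le_of_ne hzzt.1 hzne.symm
  exact absurd (hlt z ⟨le_rfl, hzzt'⟩) (hz.le_of_gt zt ⟨hzzt', hzzt.2⟩).not_gt

lemma zdia_le (hz : z ∈ P m g r (k0f m g s X)) (h : decent m g r s X z) :
    zdia m g r s X ≤ z :=
  Nat.sInf_le ⟨hz, h⟩

lemma zdia_mem (hm : 1 ≤ m) (hne : X.Nonempty) (hX : ∀ J ∈ X, s J ≤ g m) :
    zdia m g r s X ∈ Set.Icc (k0f m g s X) m ∧
      ∀ j ∈ Set.Ico (k0f m g s X) (zdia m g r s X), rate g r (zdia m g r s X) < rate g r j :=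
  (mem_P_iff (k0f_mem hm hne hX).2).1 (zdia_spec hm hne hX).1

lemma zdia_mem_Icc (hm : 1 ≤ m) (hX : ∀ J ∈ X, s J ≤ g m) (hJ : J ∈ X) :
    zdia m g r s X ∈ Set.Icc (mty m g s J) m :=
  have h := (zdia_mem hm ⟨J, hJ⟩ hX).1
  ⟨(mty_le_k0f hJ).trans h.1, h.2⟩

lemma lt_SH_zdia (hm : 1 ≤ m) (hne : Y.Nonempty) (hY : ∀ J ∈ Y, s' J ∈ Set.Ioc 0 (g m))
    (hz : 1 ≤ z) (hlt : z < k0f m g s' Y) : g z < SH m g r s' Y (zdia m g r s' Y) := by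
  obtain ⟨J, hJ, hk⟩ := exists_mty_eq_k0f (m := m) (g := g) (s := s') hne
  have hk0 := k0f_mem hm hne fun J hJ => (hY J hJ).2
  calc g z
    _ < s' J := lt_size_of_lt_mty ⟨hz, hlt.le.trans hk0.2⟩ (hk ▸ hlt)
    _ ≤ SH m g r s' Y (zdia m g r s' Y) := by
      refine size_le_SH (fun J hJ => (hY J hJ).1.le) hJ ?_
      rw [hk]
      exact mem_A_of_mem_P hk0 (zdia_spec hm hne fun J hJ => (hY J hJ).2).1

lemma zdia_mono (hm : 1 ≤ m) (hg : ∀ i ∈ Set.Icc 1 m, 0 < g i) (hr : ∀ i ∈ Set.Icc 1 m, 0 < r i)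
    (hne : X.Nonempty) (hX : ∀ J ∈ X, s J ∈ Set.Ioc 0 (g m)) (hneY : Y.Nonempty)
    (hY : ∀ J ∈ Y, s' J ∈ Set.Ioc 0 (g m))
    (hXY : ∀ z, exactLoad m g s X z ≤ exactLoad m g s' Y z) :
    zdia m g r s X ≤ zdia m g r s' Y := by
  set b := zdia m g r s' Y with hb_def
  have hX0 : ∀ J ∈ X, 0 ≤ s J := fun J hJ => (hX J hJ).1.le
  have hY0 : ∀ J ∈ Y, 0 ≤ s' J := fun J hJ => (hY J hJ).1.le
  have hkX := k0f_mem hm hne fun J hJ => (hX J hJ).2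
  have hkXY := k0f_mono (m := m) (g := g) (fun J hJ => (hX J hJ).1) hXY
  obtain ⟨hkb, hbmin⟩ := zdia_mem (r := r) hm hneY fun J hJ => (hY J hJ).2
  rw [← hb_def] at hkb hbmin
  have hb : b ∈ Set.Icc 1 m := ⟨hkX.1.trans (hkXY.trans hkb.1), hkb.2⟩
  have hdecent : decent m g r s' Y b := (zdia_spec hm hneY fun J hJ => (hY J hJ).2).2
  obtain ⟨i, hi⟩ := exists_isFirstMin (rate g r) (hkXY.trans hkb.1)
  have hiP : i ∈ P m g r (k0f m g s X) :=
    (mem_P_iff hkX.2).2 ⟨⟨hi.mem.1, hi.mem.2.trans hb.2⟩, hi.lt_of_lt⟩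
  have hiT : i ∈ TIcc m g r b :=
    (mem_TIcc_iff hb).2 ⟨⟨hkX.1.trans hi.mem.1, hi.mem.2⟩, hi.le_of_gt⟩
  rcases hi.mem.2.eq_or_lt with rfl | hib
  · exact zdia_le hiP (decent_anti hg hr hX0 hY0 hXY hb hdecent)
  · have hikY : i < k0f m g s' Y := by
      by_contra! hle
      exact (hbmin i ⟨hle, hib⟩).not_ge (hi.le_of_gt b ⟨hib, le_rfl⟩)
    have hload := (lt_SH_zdia (r := r) hm hneY hY (hkX.1.trans hi.mem.1) hikY).le
    exact (zdia_le hiP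
      (decent_of_mem_TIcc hg hr hX0 hY0 hXY hb hiT hib.ne hload hdecent)).trans hib.le

end TopType

section Charge

variable {ι κ : Type*} {m : ℕ} {g r : ℕ → ℝ} {s : ι → ℝ} {s' : κ → ℝ} {X : Finset ι} {Y : Finset κ}
  {J : ι} {J' : κ} {j z : ℕ}

/-- The cost, at the rate of `z`, of the capacity of one type-`z` machine that the load of the
subtree rooted at `z` leaves unused. -/
def slack (m : ℕ) (g r : ℕ → ℝ) (s : ι → ℝ) (X : Finset ι) (z : ℕ) : ℝ :=
  (g z - SH m g r s X z) * rate g r z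

/-- The additional cost of running the jobs below the children of `z` at the rates of these
children instead of the rate of `z`. -/
def excess (m : ℕ) (g r : ℕ → ℝ) (s : ι → ℝ) (X : Finset ι) (z : ℕ) : ℝ :=
  ∑ i ∈ fchFin m g r z, SH m g r s X i * (rate g r i - rate g r z)

lemma slack_anti (hz : 0 ≤ rate g r z) (hXY : ∀ z, exactLoad m g s X z ≤ exactLoad m g s' Y z) :
    slack m g r s' Y z ≤ slack m g r s X z := by
  unfold slack
  gcongr
  exact SH_mono hXY z

lemma excess_mono (hz : z ∈ Set.Icc 1 m)
    (hXY : ∀ z, exactLoad m g s X z ≤ exactLoad m g s' Y z) :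
    excess m g r s X z ≤ excess m g r s' Y z := by
  unfold excess
  gcongr with i hi
  · exact sub_nonneg.2 (rate_lt_of_mem_fchFin hz hi).le
  · exact SH_mono hXY i

lemma excess_nonneg (hz : z ∈ Set.Icc 1 m) (hX : ∀ J ∈ X, 0 ≤ s J) :
    0 ≤ excess m g r s X z :=
  sum_nonneg fun i hi =>
    mul_nonneg (SH_nonneg hX i) (sub_nonneg.2 (rate_lt_of_mem_fchFin hz hi).le)

lemma excess_pos (hX : ∀ J ∈ X, 0 < s J) (hJ : J ∈ X) (hA : mty m g s J ∈ A m g r z)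
    (hne : mty m g s J ≠ z) : 0 < excess m g r s X z := by
  have hX0 : ∀ J ∈ X, 0 ≤ s J := fun J hJ => (hX J hJ).le
  have hz := mem_Icc_of_mem_A hA
  refine sum_pos' (fun i hi => mul_nonneg (SH_nonneg hX0 i)
    (sub_nonneg.2 (rate_lt_of_mem_fchFin hz hi).le)) ⟨_, chil_mem_fchFin hA hne, ?_⟩
  exact mul_pos ((hX J hJ).trans_le (size_le_SH hX0 hJ (chil_spec hA hne).2))
    (sub_pos.2 (rate_lt_of_mem_fchFin hz (chil_mem_fchFin hA hne)))

lemma exactLoad_mul_rate_add_sum (hz : z ∈ Set.Icc 1 m) (hgz : 0 < g z) :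
    exactLoad m g s X z * rate g r z + ∑ i ∈ fchFin m g r z, SH m g r s X i * rate g r i =
      r z + (excess m g r s X z - slack m g r s X z) := by
  have hr : g z * rate g r z = r z := mul_div_cancel₀ _ hgz.ne'
  simp only [excess, slack, SH_eq_exactLoad_add hz, mul_sub, sum_sub_distrib, ← sum_mul]
  linear_combination hr

lemma sum_H_mul_rate_sub :
    ∑ i ∈ fchFin m g r z, ∑ J ∈ H m g r s i X, s J * (rate g r i - rate g r z) =
      excess m g r s X z :=
  sum_congr rfl fun _ _ => (sum_mul _ _ _).symm

lemma le_SH_iff_slack_nonpos (hz : 0 < rate g r z) :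
    g z ≤ SH m g r s X z ↔ slack m g r s X z ≤ 0 := by
  rw [slack, ← sub_nonpos, ← zero_mul (rate g r z), mul_le_mul_iff_left₀ hz, zero_mul]

lemma charge_of_notMem (h : mty m g s J ∉ A m g r (zdia m g r s X)) :
    charge m g r s X J = s J * rate g r (idxT m g r (zdia m g r s X) (mty m g s J)) :=
  if_neg h

lemma charge_of_mem (hz : z ∈ Set.Icc 1 m) (hgz : 0 < g z) (hrz : 0 < rate g r z)
    (hzX : zdia m g r s X = z) (hA : mty m g s J ∈ A m g r z) :
    charge m g r s X J =
      if slack m g r s X z ≤ 0 then s J * rate g r z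
      else if slack m g r s X z < excess m g r s X z then
        if mty m g s J = z then s J * rate g r z
        else s J * (rate g r (chil m g r z (mty m g s J)) -
          (rate g r (chil m g r z (mty m g s J)) - rate g r z) *
            ((excess m g r s X z - slack m g r s X z) / excess m g r s X z))
      else if mty m g s J = z then
        s J * rate g r z *
          (1 + (slack m g r s X z - excess m g r s X z) / (exactLoad m g s X z * rate g r z))
      else s J * rate g r (chil m g r z (mty m g s J)) := by
  have hrate : ∀ i, r i / g i = rate g r i := fun _ => rfl
  have hexact : Ssum s {J ∈ X | mty m g s J = z} = exactLoad m g s X z := rfl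
  have hover : r z < r z + (excess m g r s X z - slack m g r s X z) ↔
      slack m g r s X z < excess m g r s X z := by
    rw [lt_add_iff_pos_right, sub_pos]
  simp only [charge, hzX, hrate, hexact, if_pos hA, exactLoad_mul_rate_add_sum hz hgz,
    sum_H_mul_rate_sub, le_SH_iff_slack_nonpos hrz, hover, add_sub_cancel_left,
    sub_add_cancel_left, neg_sub]

lemma charge_of_mty_eq (hg : ∀ i ∈ Set.Icc 1 m, 0 < g i) (hr : ∀ i ∈ Set.Icc 1 m, 0 < r i)
    (hX : ∀ J ∈ X, 0 ≤ s J) (hz : z ∈ Set.Icc 1 m) (hzX : zdia m g r s X = z)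
    (hJ : mty m g s J = z) :
    charge m g r s X J = s J * (rate g r z +
      max 0 (slack m g r s X z - excess m g r s X z) / exactLoad m g s X z) := by
  have hrz := rate_pos hg hr hz
  have hexcess : 0 ≤ excess m g r s X z := excess_nonneg hz hX
  rw [charge_of_mem hz (hg z hz) hrz hzX (hJ.symm ▸ self_mem_A hz)]
  simp only [if_pos hJ]
  split_ifs with hslack hlt
  · rw [max_eq_left (by linarith), zero_div, add_zero]
  · rw [max_eq_left (by linarith), zero_div, add_zero]
  · rw [max_eq_right (by linarith), mul_assoc, mul_add, mul_one, mul_comm (exactLoad m g s X z),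
      ← mul_div_assoc, mul_div_mul_left _ _ hrz.ne']

lemma charge_of_mty_ne (hg : ∀ i ∈ Set.Icc 1 m, 0 < g i) (hr : ∀ i ∈ Set.Icc 1 m, 0 < r i)
    (hX : ∀ J ∈ X, 0 < s J) (hJ : J ∈ X) (hzX : zdia m g r s X = z)
    (hA : mty m g s J ∈ A m g r z) (hne : mty m g s J ≠ z) :
    charge m g r s X J = s J * (rate g r z +
      (rate g r (chil m g r z (mty m g s J)) - rate g r z) *
        min 1 (max 0 (slack m g r s X z) / excess m g r s X z)) := by
  have hz := mem_Icc_of_mem_A hA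
  have hexcess := excess_pos hX hJ hA hne
  rw [charge_of_mem hz (hg z hz) (rate_pos hg hr hz) hzX hA]
  simp only [if_neg hne]
  split_ifs with hslack hlt
  · rw [max_eq_left hslack, zero_div, min_eq_right zero_le_one, mul_zero, add_zero]
  · rw [max_eq_right (by linarith), min_eq_right ((div_le_one hexcess).2 hlt.le), sub_div,
      div_self hexcess.ne']
    ring
  · rw [max_eq_right (by linarith), min_eq_left ((one_le_div hexcess).2 (not_lt.1 hlt))]
    ring

lemma exists_mul_rate_le_charge (hm : 1 ≤ m) (hg : ∀ i ∈ Set.Icc 1 m, 0 < g i)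
    (hr : ∀ i ∈ Set.Icc 1 m, 0 < r i) (hX : ∀ J ∈ X, s J ∈ Set.Ioc 0 (g m)) (hJ : J ∈ X) :
    ∃ j ∈ Set.Icc (mty m g s J) (zdia m g r s X), s J * rate g r j ≤ charge m g r s X J := by
  have hz := zdia_mem_Icc (r := r) hm (fun J hJ => (hX J hJ).2) hJ
  have hk := mty_mem hm (hX J hJ).2
  have hX0 : ∀ J ∈ X, 0 ≤ s J := fun J hJ => (hX J hJ).1.le
  by_cases hA : mty m g s J ∈ A m g r (zdia m g r s X)
  · have hz1 := mem_Icc_of_mem_A hA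
    refine ⟨_, ⟨hz.1, le_rfl⟩, ?_⟩
    by_cases hne : mty m g s J = zdia m g r s X
    · rw [charge_of_mty_eq hg hr hX0 hz1 rfl hne]
      refine mul_le_mul_of_nonneg_left (le_add_of_nonneg_right ?_) (hX0 J hJ)
      exact div_nonneg (le_max_left _ _) (exactLoad_nonneg hX0 _)
    · rw [charge_of_mty_ne hg hr (fun J hJ => (hX J hJ).1) hJ rfl hA hne]
      refine mul_le_mul_of_nonneg_left (le_add_of_nonneg_right ?_) (hX0 J hJ)
      exact mul_nonneg
        (sub_nonneg.2 (rate_lt_of_mem_fchFin hz1 (chil_mem_fchFin hA hne)).le)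
        (le_min zero_le_one (div_nonneg (le_max_left _ _) (excess_nonneg hz1 hX0)))
  · have hi := isFirstMin_idxT (g := g) (r := r) hk.1 hz.1 hz.2
    exact ⟨_, hi.mem, (charge_of_notMem hA).ge⟩

lemma charge_le_mul_rate (hm : 1 ≤ m) (hg : ∀ i ∈ Set.Icc 1 m, 0 < g i)
    (hr : ∀ i ∈ Set.Icc 1 m, 0 < r i) (hX : ∀ J ∈ X, s J ∈ Set.Ioc 0 (g m)) (hJ : J ∈ X)
    (hj : j ∈ Set.Ico (mty m g s J) (zdia m g r s X)) :
    charge m g r s X J ≤ s J * rate g r j := by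
  have hz := zdia_mem_Icc (r := r) hm (fun J hJ => (hX J hJ).2) hJ
  have hk := mty_mem hm (hX J hJ).2
  by_cases hA : mty m g s J ∈ A m g r (zdia m g r s X)
  · have hne := (hj.1.trans_lt hj.2).ne
    have hlt := rate_lt_of_mem_fchFin (mem_Icc_of_mem_A hA) (chil_mem_fchFin hA hne)
    rw [charge_of_mty_ne hg hr (fun J hJ => (hX J hJ).1) hJ rfl hA hne]
    refine mul_le_mul_of_nonneg_left (le_trans ?_ (rate_chil_le hA hj.1 hj.2)) (hX J hJ).1.le
    rw [← le_sub_iff_add_le']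
    exact mul_le_of_le_one_right (sub_nonneg.2 hlt.le) (min_le_left _ _)
  · rw [charge_of_notMem hA]
    exact mul_le_mul_of_nonneg_left
      ((isFirstMin_idxT hk.1 hz.1 hz.2).le ⟨hj.1, hj.2.le⟩) (hX J hJ).1.le

lemma charge_nonneg (hm : 1 ≤ m) (hg : ∀ i ∈ Set.Icc 1 m, 0 < g i)
    (hr : ∀ i ∈ Set.Icc 1 m, 0 < r i) (hX : ∀ J ∈ X, s J ∈ Set.Ioc 0 (g m)) (hJ : J ∈ X) :
    0 ≤ charge m g r s X J := by
  obtain ⟨j, hj, hle⟩ := exists_mul_rate_le_charge hm hg hr hX hJ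
  have hk := mty_mem hm (hX J hJ).2
  have hz := zdia_mem_Icc (r := r) hm (fun J hJ => (hX J hJ).2) hJ
  exact (mul_nonneg (hX J hJ).1.le
    (rate_pos hg hr ⟨hk.1.trans hj.1, hj.2.trans hz.2⟩).le).trans hle

lemma charge_anti_of_zdia_eq (hg : ∀ i ∈ Set.Icc 1 m, 0 < g i)
    (hr : ∀ i ∈ Set.Icc 1 m, 0 < r i) (hX : ∀ J ∈ X, 0 < s J) (hY : ∀ J ∈ Y, 0 < s' J)
    (hXY : ∀ z, exactLoad m g s X z ≤ exactLoad m g s' Y z) (hJ : J ∈ X) (hJ' : J' ∈ Y)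
    (hs : s' J' = s J) (hzd : zdia m g r s' Y = zdia m g r s X) :
    charge m g r s' Y J' ≤ charge m g r s X J := by
  have hX0 : ∀ J ∈ X, 0 ≤ s J := fun J hJ => (hX J hJ).le
  have hmty := mty_congr (m := m) (g := g) hs
  by_cases hA : mty m g s J ∈ A m g r (zdia m g r s X)
  · have hz := mem_Icc_of_mem_A hA
    have hslack := slack_anti (rate_pos hg hr hz).le hXY
    have hexcess := excess_mono (r := r) hz hXY
    by_cases hne : mty m g s J = zdia m g r s X
    · rw [charge_of_mty_eq hg hr hX0 hz rfl hne, charge_of_mty_eq hg hr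
        (fun J hJ => (hY J hJ).le) hz hzd (hmty.trans hne), hs]
      have hpos : 0 < exactLoad m g s X (zdia m g r s X) := by
        rw [← hne]
        exact (hX J hJ).trans_le (size_le_exactLoad hX0 hJ)
      have := hX0 J hJ
      gcongr
      exact hXY _
    · rw [charge_of_mty_ne hg hr hX hJ rfl hA hne,
        charge_of_mty_ne hg hr hY hJ' hzd (hmty ▸ hA) (hmty ▸ hne), hs, hmty]
      have := hX0 J hJ
      have := excess_pos hX hJ hA hne
      gcongr
      exact sub_nonneg.2 (rate_lt_of_mem_fchFin hz (chil_mem_fchFin hA hne)).le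
  · rw [charge_of_notMem hA, charge_of_notMem (by rwa [hzd, hmty]), hzd, hmty, hs]

lemma charge_anti (hm : 1 ≤ m) (hg : ∀ i ∈ Set.Icc 1 m, 0 < g i)
    (hr : ∀ i ∈ Set.Icc 1 m, 0 < r i) (hX : ∀ J ∈ X, s J ∈ Set.Ioc 0 (g m))
    (hY : ∀ J ∈ Y, s' J ∈ Set.Ioc 0 (g m))
    (hXY : ∀ z, exactLoad m g s X z ≤ exactLoad m g s' Y z) (hJ : J ∈ X) (hJ' : J' ∈ Y)
    (hs : s' J' = s J) : charge m g r s' Y J' ≤ charge m g r s X J := by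
  rcases (zdia_mono hm hg hr ⟨J, hJ⟩ hX ⟨J', hJ'⟩ hY hXY).eq_or_lt with hzd | hlt
  · exact charge_anti_of_zdia_eq hg hr (fun J hJ => (hX J hJ).1) (fun J hJ => (hY J hJ).1)
      hXY hJ hJ' hs hzd.symm
  · obtain ⟨j, hj, hle⟩ := exists_mul_rate_le_charge hm hg hr hX hJ
    have hj' : j ∈ Set.Ico (mty m g s' J') (zdia m g r s' Y) :=
      ⟨(mty_congr hs).trans_le hj.1, hj.2.trans_lt hlt⟩
    calc charge m g r s' Y J'
      _ ≤ s' J' * rate g r j := charge_le_mul_rate hm hg hr hY hJ' hj'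
      _ = s J * rate g r j := by rw [hs]
      _ ≤ charge m g r s X J := hle

end Charge

section Integration

variable {α κ E : Type*} [MeasurableSpace α] {ν : Measure α} [NormedAddCommGroup E]
  {U : Finset κ} {a : α → Finset κ}

/-- `a` is a timetable for the finite set `U`: a time-dependent subset `a t` of `U` in which every
element is active on a measurable set of times of finite measure. -/
structure IsTimetable (ν : Measure α) (U : Finset κ) (a : α → Finset κ) : Prop where
  subset : ∀ t, a t ⊆ U
  measurableSet_mem : ∀ x ∈ U, MeasurableSet {t | x ∈ a t}
  measure_mem_lt_top : ∀ x ∈ U, ν {t | x ∈ a t} < ⊤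

lemma IsTimetable.measurableSet_eq (ha : IsTimetable ν U a) {W : Finset κ} (hW : W ⊆ U) :
    MeasurableSet {t | a t = W} := by
  have hinter : {t | a t = W} = ⋂ x ∈ U, {t | x ∈ a t ↔ x ∈ W} := by
    ext t
    simp only [Set.mem_ofPred_eq, Set.mem_iInter]
    refine ⟨fun h x _ => by rw [h], fun h => Finset.ext fun x => ?_⟩
    exact ⟨fun hx => (h x (ha.subset t hx)).1 hx, fun hx => (h x (hW hx)).2 hx⟩
  rw [hinter]
  exact Finset.measurableSet_biInter _ fun x hx =>
    (ha.measurableSet_mem x hx).iff (MeasurableSet.const _)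

lemma IsTimetable.measure_eq_lt_top (ha : IsTimetable ν U a) {W : Finset κ} (hW : W ⊆ U)
    (hne : W.Nonempty) : ν {t | a t = W} < ⊤ := by
  obtain ⟨x, hx⟩ := hne
  refine (measure_mono fun t ht => ?_).trans_lt (ha.measure_mem_lt_top x (hW hx))
  rw [Set.mem_ofPred_eq] at ht ⊢
  rwa [ht]

lemma IsTimetable.integrable_comp (ha : IsTimetable ν U a) {F : Finset κ → E} (hF : F ∅ = 0) :
    Integrable (fun t => F (a t)) ν := by
  have hsum : (fun t => F (a t)) =
      fun t => ∑ W ∈ U.powerset, Set.indicator {t | a t = W} (fun _ => F W) t := by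
    funext t
    simp only [Set.indicator_apply, Set.mem_ofPred_eq, sum_ite_eq,
      if_pos (mem_powerset.2 (ha.subset t))]
  rw [hsum]
  refine integrable_finsetSum _ fun W hW => ?_
  have hWU := mem_powerset.1 hW
  rcases W.eq_empty_or_nonempty with rfl | hne
  · simp [hF]
  · exact (integrable_indicator_iff (ha.measurableSet_eq hWU)).2
      (integrableOn_const (ha.measure_eq_lt_top hWU hne).ne)

lemma integral_le_mul_integral_of_comp_affine_le {F G : ℝ → ℝ} {c b : ℝ} (hc : 0 < c)
    (hF : Integrable F) (hG : Integrable G) (hFG : ∀ t, F (c * t + b) ≤ G t) :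
    ∫ t, F t ≤ c * ∫ t, G t := by
  have haffine : ∫ t, F (c * t + b) = c⁻¹ * ∫ t, F t := by
    rw [Measure.integral_comp_mul_left (fun t => F (t + b)) c, integral_add_right_eq_self F b,
      abs_of_pos (inv_pos.2 hc), smul_eq_mul]
  have hint : Integrable fun t => F (c * t + b) := (hF.comp_add_right b).comp_mul_left' hc.ne'
  have hle := integral_mono hint hG hFG
  rwa [haffine, inv_mul_le_iff₀ hc] at hle

end Integration

section ChargeAt

variable {α κ : Type*} {m : ℕ} {g r : ℕ → ℝ} {s : κ → ℝ}
  {U : Finset κ} {a : α → Finset κ} {t : α}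

/-- The cost charged to the job `x` at time `t` when `a t` is the set of active jobs, with the
value `0` if `x` is not active. -/
def chargeAt (m : ℕ) (g r : ℕ → ℝ) (s : κ → ℝ) (a : α → Finset κ) (x : κ) (t : α) : ℝ :=
  (a t : Set κ).indicator (charge m g r s (a t)) x

lemma chargeAt_nonneg (hm : 1 ≤ m) (hg : ∀ i ∈ Set.Icc 1 m, 0 < g i)
    (hr : ∀ i ∈ Set.Icc 1 m, 0 < r i) (hs : ∀ x ∈ a t, s x ∈ Set.Ioc 0 (g m)) (x : κ) :
    0 ≤ chargeAt m g r s a x t :=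
  Set.indicator_apply_nonneg fun hx => charge_nonneg hm hg hr hs hx

variable [MeasurableSpace α] {ν : Measure α}

lemma IsTimetable.integrable_chargeAt (ha : IsTimetable ν U a) (x : κ) :
    Integrable (chargeAt m g r s a x) ν :=
  ha.integrable_comp (F := fun W => (W : Set κ).indicator (charge m g r s W) x)
    (Set.indicator_of_notMem (by simp) _)

lemma IsTimetable.setIntegral_sum_charge (ha : IsTimetable ν U a) {S : Set α}
    (hS : ∀ t ∉ S, a t = ∅) :
    ∫ t in S, ∑ x ∈ a t, charge m g r s (a t) x ∂ν = ∑ x ∈ U, ∫ t, chargeAt m g r s a x t ∂ν := by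
  rw [setIntegral_eq_integral_of_forall_compl_eq_zero fun t ht => by rw [hS t ht, sum_empty],
    ← integral_finsetSum _ fun x _ => ha.integrable_chargeAt x]
  congr with t
  exact (sum_indicator_subset _ (ha.subset t)).symm

end ChargeAt

section ActiveJobs

variable {ι κ : Type*} {m : ℕ} {g r : ℕ → ℝ} {s Ilo Ihi : ι → ℝ} {X : Finset ι} {J : ι}
  {d t t' : ℝ} {x : ι ⊕ ι}

lemma mem_activeJ : J ∈ activeJ Ilo Ihi X t ↔ J ∈ X ∧ t ∈ Set.Ico (Ilo J) (Ihi J) :=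
  mem_filter

lemma inl_mem_activeJH :
    Sum.inl J ∈ activeJH Ilo Ihi X d t ↔ J ∈ X ∧ t ∈ Set.Ico (Ilo J) (Ihi J) := by
  simp [activeJH]

lemma inr_mem_activeJH :
    Sum.inr J ∈ activeJH Ilo Ihi X d t ↔
      J ∈ X ∧ t ∈ Set.Ico (Ihi J) (Ihi J + d) ∩ spanSet Ilo Ihi X := by
  simp [activeJH]

lemma mem_spanSet_of_mem_activeJ (hJ : J ∈ activeJ Ilo Ihi X t) : t ∈ spanSet Ilo Ihi X :=
  Set.mem_biUnion (mem_activeJ.1 hJ).1 (mem_activeJ.1 hJ).2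

lemma mem_spanSet_of_mem_activeJH (hx : x ∈ activeJH Ilo Ihi X d t) :
    t ∈ spanSet Ilo Ihi X := by
  rcases x with J | J
  · exact Set.mem_biUnion (inl_mem_activeJH.1 hx).1 (inl_mem_activeJH.1 hx).2
  · exact (inr_mem_activeJH.1 hx).2.2

lemma activeJ_eq_empty (ht : t ∉ spanSet Ilo Ihi X) : activeJ Ilo Ihi X t = ∅ :=
  eq_empty_of_forall_notMem fun _ hJ => ht (mem_spanSet_of_mem_activeJ hJ)

lemma activeJH_eq_empty (ht : t ∉ spanSet Ilo Ihi X) : activeJH Ilo Ihi X d t = ∅ :=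
  eq_empty_of_forall_notMem fun _ hx => ht (mem_spanSet_of_mem_activeJH hx)

lemma size_mem_of_mem_activeJ (hs : ∀ J ∈ X, s J ∈ Set.Ioc 0 (g m)) (t : ℝ) :
    ∀ J ∈ activeJ Ilo Ihi X t, s J ∈ Set.Ioc 0 (g m) :=
  fun J hJ => hs J (mem_activeJ.1 hJ).1

lemma size_mem_of_mem_activeJH (hs : ∀ J ∈ X, s J ∈ Set.Ioc 0 (g m)) (t : ℝ) :
    ∀ x ∈ activeJH Ilo Ihi X d t, Sum.elim s s x ∈ Set.Ioc 0 (g m) := by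
  rintro (J | J) hx
  · exact hs J (inl_mem_activeJH.1 hx).1
  · exact hs J (inr_mem_activeJH.1 hx).1

lemma isTimetable_activeJ : IsTimetable volume X (activeJ Ilo Ihi X) := by
  have hmem : ∀ J ∈ X, {t | J ∈ activeJ Ilo Ihi X t} = Set.Ico (Ilo J) (Ihi J) := fun J hJ =>
    Set.ext fun t => mem_activeJ.trans (and_iff_right hJ)
  refine ⟨fun t => filter_subset _ _, fun J hJ => ?_, fun J hJ => ?_⟩
  · rw [hmem J hJ]
    exact measurableSet_Ico
  · rw [hmem J hJ]
    exact measure_Ico_lt_top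

lemma isTimetable_activeJH : IsTimetable volume (X.disjSum X) (activeJH Ilo Ihi X d) := by
  have hspan : MeasurableSet (spanSet Ilo Ihi X) :=
    Finset.measurableSet_biUnion _ fun _ _ => measurableSet_Ico
  have hinl : ∀ J ∈ X, {t | Sum.inl J ∈ activeJH Ilo Ihi X d t} = Set.Ico (Ilo J) (Ihi J) :=
    fun J hJ => Set.ext fun t => inl_mem_activeJH.trans (and_iff_right hJ)
  have hinr : ∀ J ∈ X, {t | Sum.inr J ∈ activeJH Ilo Ihi X d t} =
      Set.Ico (Ihi J) (Ihi J + d) ∩ spanSet Ilo Ihi X :=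
    fun J hJ => Set.ext fun t => inr_mem_activeJH.trans (and_iff_right hJ)
  constructor
  · rintro t (J | J) hx
    · exact inl_mem_disjSum.2 (inl_mem_activeJH.1 hx).1
    · exact inr_mem_disjSum.2 (inr_mem_activeJH.1 hx).1
  · rintro (J | J) hx
    · rw [hinl J (inl_mem_disjSum.1 hx)]
      exact measurableSet_Ico
    · rw [hinr J (inr_mem_disjSum.1 hx)]
      exact measurableSet_Ico.inter hspan
  · rintro (J | J) hx
    · rw [hinl J (inl_mem_disjSum.1 hx)]
      exact measure_Ico_lt_top
    · rw [hinr J (inr_mem_disjSum.1 hx)]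
      exact (measure_mono Set.inter_subset_left).trans_lt measure_Ico_lt_top

lemma exactLoad_le_of_injOn {s' : κ → ℝ} {Y : Finset κ} (hY : ∀ K ∈ Y, 0 ≤ s' K) {e : ι → κ}
    (hinj : Set.InjOn e X) (hmaps : ∀ J ∈ X, e J ∈ Y) (hsize : ∀ J, s' (e J) = s J) (z : ℕ) :
    exactLoad m g s X z ≤ exactLoad m g s' Y z := by
  have himage : {J ∈ X | mty m g s J = z}.image e ⊆ {K ∈ Y | mty m g s' K = z} := by
    refine image_subset_iff.2 fun J hJ => ?_
    obtain ⟨hJX, hJz⟩ := mem_filter.1 hJ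
    exact mem_filter.2 ⟨hmaps J hJX, (mty_congr (hsize J)).trans hJz⟩
  calc exactLoad m g s X z
    _ = ∑ K ∈ {J ∈ X | mty m g s J = z}.image e, s' K := by
      rw [sum_image (hinj.mono (coe_subset.2 (filter_subset _ _)))]
      exact sum_congr rfl fun J _ => (hsize J).symm
    _ ≤ exactLoad m g s' Y z :=
      sum_le_sum_of_subset_of_nonneg himage fun K hK _ => hY K (mem_filter.1 hK).1

lemma exactLoad_activeJ_le (hs : ∀ J ∈ X, s J ∈ Set.Ioc 0 (g m)) (htt' : t ≤ t')
    (ht' : t' ≤ t + d) (hspan : t' ∈ spanSet Ilo Ihi X) (z : ℕ) :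
    exactLoad m g s (activeJ Ilo Ihi X t) z ≤
      exactLoad m g (Sum.elim s s) (activeJH Ilo Ihi X d t') z := by
  let e : ι → ι ⊕ ι := fun K => if t' < Ihi K then Sum.inl K else Sum.inr K
  refine exactLoad_le_of_injOn (fun x hx => (size_mem_of_mem_activeJH hs t' x hx).1.le) (e := e)
    (fun K _ K' _ h => ?_) (fun K hK => ?_) (fun K => ?_) z
  · simp only [e] at h
    split_ifs at h
    · exact Sum.inl_injective h
    · exact Sum.inr_injective h
  · obtain ⟨hKX, hlo, hhi⟩ := mem_activeJ.1 hK
    simp only [e]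
    split_ifs with h
    · exact inl_mem_activeJH.2 ⟨hKX, hlo.trans htt', h⟩
    · exact inr_mem_activeJH.2 ⟨hKX, ⟨not_lt.1 h, by linarith⟩, hspan⟩
  · simp only [e]
    split_ifs <;> rfl

lemma chargeAt_activeJH_le (hm : 1 ≤ m) (hg : ∀ i ∈ Set.Icc 1 m, 0 < g i)
    (hr : ∀ i ∈ Set.Icc 1 m, 0 < r i) (hs : ∀ J ∈ X, s J ∈ Set.Ioc 0 (g m))
    (hx : Sum.elim s s x = s J)
    (hactive : x ∈ activeJH Ilo Ihi X d t' →
      J ∈ activeJ Ilo Ihi X t ∧ t ≤ t' ∧ t' ≤ t + d) :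
    chargeAt m g r (Sum.elim s s) (activeJH Ilo Ihi X d) x t' ≤
      chargeAt m g r s (activeJ Ilo Ihi X) J t := by
  have hsize := size_mem_of_mem_activeJ (Ilo := Ilo) (Ihi := Ihi) hs t
  by_cases hxt : x ∈ activeJH Ilo Ihi X d t'
  · obtain ⟨hJ, htt', ht'⟩ := hactive hxt
    rw [chargeAt, chargeAt, Set.indicator_of_mem (mem_coe.2 hxt),
      Set.indicator_of_mem (mem_coe.2 hJ)]
    exact charge_anti hm hg hr hsize (size_mem_of_mem_activeJH hs t')
      (exactLoad_activeJ_le hs htt' ht' (mem_spanSet_of_mem_activeJH hxt)) hJ hxt hx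
  · rw [chargeAt, Set.indicator_of_notMem (mem_coe.not.2 hxt)]
    exact chargeAt_nonneg hm hg hr hsize J

lemma integral_chargeAt_inl_le (hm : 1 ≤ m) (hg : ∀ i ∈ Set.Icc 1 m, 0 < g i)
    (hr : ∀ i ∈ Set.Icc 1 m, 0 < r i) (hs : ∀ J ∈ X, s J ∈ Set.Ioc 0 (g m)) (hd : 0 ≤ d) (J : ι) :
    ∫ t, chargeAt m g r (Sum.elim s s) (activeJH Ilo Ihi X d) (Sum.inl J) t ≤
      ∫ t, chargeAt m g r s (activeJ Ilo Ihi X) J t :=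
  integral_mono (isTimetable_activeJH.integrable_chargeAt _)
    (isTimetable_activeJ.integrable_chargeAt _) fun _ =>
      chargeAt_activeJH_le hm hg hr hs rfl fun hJ =>
        ⟨mem_activeJ.2 (inl_mem_activeJH.1 hJ), le_rfl, le_add_of_nonneg_right hd⟩

lemma integral_chargeAt_inr_le (hm : 1 ≤ m) (hg : ∀ i ∈ Set.Icc 1 m, 0 < g i)
    (hr : ∀ i ∈ Set.Icc 1 m, 0 < r i) (hs : ∀ J ∈ X, s J ∈ Set.Ioc 0 (g m)) (hd : 1 ≤ d)
    (hlen : 1 ≤ Ihi J - Ilo J) :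
    ∫ t, chargeAt m g r (Sum.elim s s) (activeJH Ilo Ihi X d) (Sum.inr J) t ≤
      d * ∫ t, chargeAt m g r s (activeJ Ilo Ihi X) J t := by
  -- `t ↦ d * (t - Ihi J) + Ihi J + d` maps `[Ihi J - 1, Ihi J)` onto `[Ihi J, Ihi J + d)`.
  refine integral_le_mul_integral_of_comp_affine_le (b := Ihi J + d - d * Ihi J)
    (by positivity) (isTimetable_activeJH.integrable_chargeAt _)
    (isTimetable_activeJ.integrable_chargeAt _) fun t =>
      chargeAt_activeJH_le hm hg hr hs rfl fun hJ => ?_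
  obtain ⟨hJX, ⟨hge, hlt⟩, -⟩ := inr_mem_activeJH.1 hJ
  have hd0 : 0 < d := by positivity
  have hlo : Ihi J - 1 ≤ t := le_of_mul_le_mul_left (by linarith) hd0
  have hhi : t < Ihi J := lt_of_mul_lt_mul_left (by linarith) hd0.le
  have hslope : 0 ≤ (d - 1) * (Ihi J - t) :=
    mul_nonneg (sub_nonneg.2 hd) (sub_nonneg.2 hhi.le)
  refine ⟨mem_activeJ.2 ⟨hJX, by linarith, hhi⟩, by linarith, by linarith⟩

end ActiveJobs

lemma pos_of_pos_one_of_strictMono {m : ℕ} {f : ℕ → ℝ} (h1 : 0 < f 1)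
    (hf : ∀ i j, 1 ≤ i → i < j → j ≤ m → f i < f j) : ∀ i ∈ Set.Icc 1 m, 0 < f i := by
  rintro i ⟨hi, him⟩
  rcases hi.eq_or_lt with rfl | hlt
  · exact h1
  · exact h1.trans (hf 1 i le_rfl hlt him)

theorem statement_16_general {ι : Type*} {m : ℕ} {g r : ℕ → ℝ} {s Ilo Ihi : ι → ℝ}
    {𝒥 : Finset ι} {d : ℝ} (hm : 1 ≤ m) (hg : ∀ i ∈ Set.Icc 1 m, 0 < g i)
    (hr : ∀ i ∈ Set.Icc 1 m, 0 < r i) (hs : ∀ J ∈ 𝒥, s J ∈ Set.Ioc 0 (g m))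
    (hlen : ∀ J ∈ 𝒥, 1 ≤ Ihi J - Ilo J) (hd : 1 ≤ d) :
    (∫ t in spanSet Ilo Ihi 𝒥,
        ∑ x ∈ activeJH Ilo Ihi 𝒥 d t,
          charge m g r (Sum.elim s s) (activeJH Ilo Ihi 𝒥 d t) x)
      ≤ (d + 1) *
        ∫ t in spanSet Ilo Ihi 𝒥,
          ∑ J ∈ activeJ Ilo Ihi 𝒥 t,
            charge m g r s (activeJ Ilo Ihi 𝒥 t) J := by
  rw [isTimetable_activeJH.setIntegral_sum_charge fun _ => activeJH_eq_empty, sum_disjSum,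
    isTimetable_activeJ.setIntegral_sum_charge fun _ => activeJ_eq_empty, add_comm, add_mul,
    one_mul, mul_sum]
  exact add_le_add
    (sum_le_sum fun J hJ => integral_chargeAt_inr_le hm hg hr hs hd (hlen J hJ))
    (sum_le_sum fun J _ => integral_chargeAt_inl_le hm hg hr hs (zero_le_one.trans hd) J)

end

/-- `∫_{t ∈ span(𝒥)} ∑_{J ∈ 𝒥(t) ∪ ℋ(t)} r̃(𝒥(t) ∪ ℋ(t))(J) dt ≤
 (d + 1) · ∫_{t ∈ span(𝒥)} ∑_{J ∈ 𝒥(t)} r̃(𝒥(t))(J) dt`,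
where `ℋ = {F_d(J) : J ∈ 𝒥}` (artificial jobs represented via `Sum.inr`). -/
theorem statement_16 {ι : Type*} (m : ℕ) (g r : ℕ → ℝ) (s Ilo Ihi : ι → ℝ)
    (𝒥 : Finset ι) (μ d : ℝ)
    (hm : 1 ≤ m)
    (hg1 : 0 < g 1) (hr1 : 0 < r 1)
    (hg : ∀ i j, 1 ≤ i → i < j → j ≤ m → g i < g j)
    (hr : ∀ i j, 1 ≤ i → i < j → j ≤ m → r i < r j)
    (hJ : 𝒥.Nonempty)
    (hs : ∀ J ∈ 𝒥, 0 < s J ∧ s J ≤ g m)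
    (hμ : 1 ≤ μ)
    (hlen : ∀ J ∈ 𝒥, 1 ≤ Ihi J - Ilo J ∧ Ihi J - Ilo J ≤ μ)
    (hd : μ ≤ d) :
    (∫ t in spanSet Ilo Ihi 𝒥,
        ∑ x ∈ activeJH Ilo Ihi 𝒥 d t,
          charge m g r (Sum.elim s s) (activeJH Ilo Ihi 𝒥 d t) x)
      ≤ (d + 1) *
        ∫ t in spanSet Ilo Ihi 𝒥,
          ∑ J ∈ activeJ Ilo Ihi 𝒥 t,
            charge m g r s (activeJ Ilo Ihi 𝒥 t) J := by
  exact statement_16_general hm (pos_of_pos_one_of_strictMono hg1 hg)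
    (pos_of_pos_one_of_strictMono hr1 hr) hs (fun J hJ => (hlen J hJ).1) (hμ.trans hd)

end BSHM
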